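/- arXiv:1904.01925 — 5 statements merged into one kernel-verified Lean document; each statement's English description precedes it below -/
import Mathlib

section
/- Let a ∈ ℝ with a ≥ 1 and let n, s, t ∈ ℕ with 1 ≤ s ≤ t ≤ n. Assume a·s + t ≥ n, t ≥ a·s, and s + a·s ≤ t. Then the number M⁽ᵃ⁾(n,s,t) of monochromatic generalized Schur triples (x, y, x + ⌊ay⌋) on [n] under the block coloring R^s B^{t−s} R^{n−t} equals Σ_{y=1}^{⌊s/a⌋} Σ_{x=1}^{s−⌊ay⌋} 1 + Σ_{y=s+1}^{⌊(t−s)/a⌋} Σ_{x=s+1}^{t−⌊ay⌋} 1 + Σ_{y=1}^{⌊(n−t)/a⌋} Σ_{x=t+1}^{n−⌊ay⌋} 1 + Σ_{y=t+1}^{⌊n/a⌋} Σ_{x=1}^{n−⌊ay⌋} 1, where a sum whose lower bound exceeds its upper bound is zero. -/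
open Finset

/-- The number `M⁽ᵃ⁾(n,s,t)` of monochromatic generalized Schur triples
`(x, y, x + ⌊ay⌋)` in `[n]³` under the block coloring `R^s B^(t-s) R^(n-t)`:
pairs `(x,y) ∈ [n]²` such that `z = x + ⌊ay⌋ ≤ n` and `x, y, z` are all red
(`≤ s` or `> t`) or all blue (in `(s,t]`). -/
noncomputable def genCountR (a : ℝ) (n s t : ℕ) : ℕ := by
  classical
  exact ((Finset.Icc 1 n ×ˢ Finset.Icc 1 n).filter
    (fun p => ((p.1 : ℤ) + ⌊a * (p.2 : ℝ)⌋ ≤ (n : ℤ)) ∧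
      (((((p.1 : ℤ) ≤ (s : ℤ) ∨ (t : ℤ) < (p.1 : ℤ)) ∧
         ((p.2 : ℤ) ≤ (s : ℤ) ∨ (t : ℤ) < (p.2 : ℤ)) ∧
         ((p.1 : ℤ) + ⌊a * (p.2 : ℝ)⌋ ≤ (s : ℤ) ∨
           (t : ℤ) < (p.1 : ℤ) + ⌊a * (p.2 : ℝ)⌋))) ∨
       (((s : ℤ) < (p.1 : ℤ) ∧ (p.1 : ℤ) ≤ (t : ℤ)) ∧
        ((s : ℤ) < (p.2 : ℤ) ∧ (p.2 : ℤ) ≤ (t : ℤ)) ∧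
        ((s : ℤ) < (p.1 : ℤ) + ⌊a * (p.2 : ℝ)⌋ ∧
          (p.1 : ℤ) + ⌊a * (p.2 : ℝ)⌋ ≤ (t : ℤ)))))).card

theorem aux_sum (a : ℝ) (ha : 1 ≤ a) (n L K N : ℕ) (hN : N ≤ n) :
    (∑ y ∈ Finset.Icc ((L : ℤ) + 1) ⌊((N : ℝ) - (K : ℝ)) / a⌋,
        (Finset.Icc ((K : ℤ) + 1) ((N : ℤ) - ⌊a * (y : ℝ)⌋)).card) =
      ∑ p ∈ Finset.Icc 1 n ×ˢ Finset.Icc 1 n,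
        if (L < p.2 ∧ K < p.1 ∧ (p.1 : ℤ) + ⌊a * (p.2 : ℝ)⌋ ≤ (N : ℤ)) then 1 else 0 := by
  have ha0 : 0 < a := by linarith
  rw [← Finset.card_sigma, ← Finset.card_filter]
  symm
  refine Finset.card_bij (fun p _ => (⟨(p.2 : ℤ), (p.1 : ℤ)⟩ : (_ : ℤ) × ℤ)) ?_ ?_ ?_
  · rintro ⟨x, y⟩ h
    simp only [Finset.mem_filter, Finset.mem_product, Finset.mem_Icc] at h
    simp only [Finset.mem_sigma, Finset.mem_Icc, Int.cast_natCast]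
    obtain ⟨_, h1, h2, h3⟩ := h
    refine ⟨⟨by omega, ?_⟩, by omega, by omega⟩
    rw [Int.le_floor, le_div_iff₀ ha0]
    have h4 : ⌊a * (y : ℝ)⌋ < (N : ℤ) - K := by omega
    rw [Int.floor_lt] at h4
    push_cast at h4 ⊢
    linarith
  · rintro ⟨x, y⟩ _ ⟨x', y'⟩ _ h
    simp only [Sigma.mk.injEq, heq_eq_eq] at h
    ext <;> simp <;> omega
  · rintro ⟨y, x⟩ h
    simp only [Finset.mem_sigma, Finset.mem_Icc] at h
    obtain ⟨⟨h1, -⟩, h3, h4⟩ := h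
    lift y to ℕ using by omega
    lift x to ℕ using by omega
    have h5 : (y : ℤ) ≤ ⌊a * ((y : ℤ) : ℝ)⌋ := by
      rw [Int.le_floor]
      push_cast
      nlinarith [(Nat.cast_nonneg y : (0 : ℝ) ≤ y)]
    refine ⟨(x, y), ?_, rfl⟩
    simp only [Finset.mem_filter, Finset.mem_product, Finset.mem_Icc]
    push_cast at h4 h5
    refine ⟨⟨⟨?_, ?_⟩, ?_, ?_⟩, ?_, ?_, ?_⟩ <;> omega

/-- For real `a ≥ 1` and `1 ≤ s ≤ t ≤ n` with `as + t ≥ n`, `t ≥ as` and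
`s + as ≤ t`, the number of monochromatic generalized Schur triples under the
block coloring `R^s B^(t-s) R^(n-t)` is given by the four double sums
(a sum whose lower bound exceeds its upper bound being zero). -/
theorem genCount_formula (a : ℝ) (ha : 1 ≤ a) (n s t : ℕ) (hs : 1 ≤ s)
    (hst : s ≤ t) (htn : t ≤ n) (h1 : (n : ℝ) ≤ a * s + t)
    (h2 : a * s ≤ (t : ℝ)) (h3 : (s : ℝ) + a * s ≤ (t : ℝ)) :
    genCountR a n s t =
      (∑ y ∈ Finset.Icc (1 : ℤ) ⌊(s : ℝ) / a⌋,
        (Finset.Icc (1 : ℤ) ((s : ℤ) - ⌊a * (y : ℝ)⌋)).card) +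
      (∑ y ∈ Finset.Icc ((s : ℤ) + 1) ⌊((t : ℝ) - (s : ℝ)) / a⌋,
        (Finset.Icc ((s : ℤ) + 1) ((t : ℤ) - ⌊a * (y : ℝ)⌋)).card) +
      (∑ y ∈ Finset.Icc (1 : ℤ) ⌊((n : ℝ) - (t : ℝ)) / a⌋,
        (Finset.Icc ((t : ℤ) + 1) ((n : ℤ) - ⌊a * (y : ℝ)⌋)).card) +
      (∑ y ∈ Finset.Icc ((t : ℤ) + 1) ⌊(n : ℝ) / a⌋,
        (Finset.Icc (1 : ℤ) ((n : ℤ) - ⌊a * (y : ℝ)⌋)).card) := by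
  have e1 := aux_sum a ha n 0 0 s (by omega)
  have e2 := aux_sum a ha n s s t (by omega)
  have e3 := aux_sum a ha n 0 t n (by omega)
  have e4 := aux_sum a ha n t 0 n (by omega)
  simp only [Nat.cast_zero, zero_add, sub_zero] at e1 e2 e3 e4
  rw [e1, e2, e3, e4, ← Finset.sum_add_distrib, ← Finset.sum_add_distrib,
    ← Finset.sum_add_distrib, genCountR, Finset.card_filter]
  refine Finset.sum_congr rfl ?_
  rintro ⟨x, y⟩ h
  simp only [Finset.mem_product, Finset.mem_Icc] at h
  obtain ⟨⟨hx1, hx2⟩, hy1, hy2⟩ := h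
  dsimp only
  have hsR : (1 : ℝ) ≤ s := by exact_mod_cast hs
  have f1 : (y : ℤ) ≤ ⌊a * (y : ℝ)⌋ := by
    rw [Int.le_floor]
    push_cast
    nlinarith [(Nat.cast_nonneg y : (0 : ℝ) ≤ y)]
  have f2 : y ≤ s → ⌊a * (y : ℝ)⌋ + s ≤ t := by
    intro hy
    have hyR : (y : ℝ) ≤ s := by exact_mod_cast hy
    have h5 : (⌊a * (y : ℝ)⌋ : ℝ) + s ≤ t := by
      have := Int.floor_le (a * (y : ℝ))
      nlinarith
    exact_mod_cast h5
  have f3 : s < y → (n : ℤ) ≤ ⌊a * (y : ℝ)⌋ + t := by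
    intro hy
    have hyR : (s : ℝ) + 1 ≤ y := by exact_mod_cast hy
    have h5 : (n : ℤ) - t ≤ ⌊a * (y : ℝ)⌋ := by
      rw [Int.le_floor]
      push_cast
      nlinarith
    omega
  have f4 : t < y → (n : ℤ) ≤ ⌊a * (y : ℝ)⌋ + s := by
    intro hy
    have hyR : (t : ℝ) + 1 ≤ y := by exact_mod_cast hy
    have h5 : (n : ℤ) - s ≤ ⌊a * (y : ℝ)⌋ := by
      rw [Int.le_floor]
      push_cast
      have q1 : a * (t + 1) ≤ a * y := by nlinarith
      have q2 : (a - 1) * (s + a * s) ≤ (a - 1) * t :=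
        mul_le_mul_of_nonneg_left h3 (by linarith)
      have q3 : 0 ≤ a * (a - 1) * s := by
        have : 0 ≤ a - 1 := by linarith
        positivity
      nlinarith
    omega
  generalize ⌊a * (y : ℝ)⌋ = w at *
  clear e1 e2 e3 e4 h1 h2 h3
  by_cases c1 : y ≤ s
  · have := f2 c1
    split_ifs <;> omega
  · have := f3 (by omega)
    by_cases c2 : y ≤ t
    · split_ifs <;> omega
    · have := f4 (by omega)
      split_ifs <;> omega
end

section
/- Let n, s, t ∈ ℕ with 1 ≤ s ≤ t ≤ n and assume 2s + t ≥ n, t ≥ 2s, and 3s ≤ t. Then the number of monochromatic generalized Schur triples (x, y, x + 2y) on [n] under the block coloring R^s B^{t−s} R^{n−t} equals M⁽²⁾(n,s,t) = ⌊s/2⌋·⌊(s−1)/2⌋ + ⌊(n−t)/2⌋·⌊(n−t−1)/2⌋ + ⌊(t−s)/2⌋·⌊(t−s−1)/2⌋ + 2s² − st + s. -/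
/-- The number `M⁽ᵏ⁾(n,s,t)` of monochromatic generalized Schur triples
`(x, y, x + ky)` in `[n]³` under the block coloring `R^s B^(t-s) R^(n-t)`:
pairs `(x,y) ∈ [n]²` such that `z = x + ky ≤ n` and `x, y, z` are all red
(`≤ s` or `> t`) or all blue (in `(s,t]`). -/
def genCount (k n s t : ℕ) : ℕ :=
  ((Finset.Icc 1 n ×ˢ Finset.Icc 1 n).filter
    (fun p => p.1 + k * p.2 ≤ n ∧
      (((p.1 ≤ s ∨ t < p.1) ∧ (p.2 ≤ s ∨ t < p.2) ∧
        (p.1 + k * p.2 ≤ s ∨ t < p.1 + k * p.2)) ∨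
       ((s < p.1 ∧ p.1 ≤ t) ∧ (s < p.2 ∧ p.2 ≤ t) ∧
        (s < p.1 + k * p.2 ∧ p.1 + k * p.2 ≤ t))))).card

def triT (m : ℕ) : Finset (ℕ × ℕ) :=
  (Finset.Icc 1 m ×ˢ Finset.Icc 1 m).filter (fun p => p.1 + 2 * p.2 ≤ m)

lemma mem_triT (m : ℕ) (p : ℕ × ℕ) :
    p ∈ triT m ↔ 1 ≤ p.1 ∧ 1 ≤ p.2 ∧ p.1 + 2 * p.2 ≤ m := by
  simp only [triT, Finset.mem_filter, Finset.mem_product, Finset.mem_Icc]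
  omega

lemma triT_sum (m a : ℕ) (h : 2 * a ≤ m) :
    ((∑ y ∈ Finset.range a, (m - 2 * (y + 1)) : ℕ) : ℤ) = a * m - a * (a + 1) := by
  induction a with
  | zero => simp
  | succ a ih =>
    rw [Finset.sum_range_succ, Nat.cast_add, ih (by omega), Nat.cast_sub (by omega)]
    push_cast
    ring

lemma triT_card (m : ℕ) : (((triT m).card : ℕ) : ℤ) = ((m / 2 : ℕ) : ℤ) * (((m - 1) / 2 : ℕ) : ℤ) := by
  have h : (triT m).card =
      ((Finset.range (m / 2)).sigma (fun y => Finset.range (m - 2 * (y + 1)))).card := by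
    apply Finset.card_nbij' (fun p => (⟨p.2 - 1, p.1 - 1⟩ : (_ : ℕ) × ℕ))
      (fun q => (q.2 + 1, q.1 + 1))
    · intro p hp
      have := (mem_triT m p).1 hp
      simp only [Finset.coe_sigma, Set.mem_sigma_iff, Finset.mem_coe, Finset.mem_range]
      omega
    · intro q hq
      simp only [Finset.coe_sigma, Set.mem_sigma_iff, Finset.mem_coe, Finset.mem_range] at hq
      refine Finset.mem_coe.2 ((mem_triT m _).2 ?_)
      dsimp only
      omega
    · intro p hp
      have := (mem_triT m p).1 hp
      ext <;> dsimp only <;> omega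
    · intro q hq
      rfl
  rw [h, Finset.card_sigma]
  simp only [Finset.card_range]
  rw [triT_sum m (m / 2) (by omega)]
  rcases Nat.even_or_odd' m with ⟨k, rfl | rfl⟩
  · rcases k with _ | k
    · simp
    · have e1 : 2 * (k + 1) / 2 = k + 1 := by omega
      have e2 : (2 * (k + 1) - 1) / 2 = k := by omega
      rw [e1, e2]; push_cast; ring
  · have e1 : (2 * k + 1) / 2 = k := by omega
    have e2 : (2 * k + 1 - 1) / 2 = k := by omega
    rw [e1, e2]; push_cast; ring

lemma triT_shift (m s : ℕ) (hs : 1 ≤ s) :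
    ((m / 2 : ℕ) : ℤ) * (((m - 1) / 2 : ℕ) : ℤ) =
      (((m + 2 * s) / 2 : ℕ) : ℤ) * (((m + 2 * s - 1) / 2 : ℕ) : ℤ) - s * m - s * (s - 1) := by
  rcases Nat.even_or_odd' m with ⟨k, rfl | rfl⟩
  · have e1 : (2 * k + 2 * s) / 2 = k + s := by omega
    have e2 : (((2 * k + 2 * s - 1) / 2 : ℕ) : ℤ) = k + s - 1 := by omega
    have e3 : 2 * k / 2 = k := by omega
    rw [e1, e2, e3]
    rcases k with _ | k
    · push_cast; simp
    · have e4 : (2 * (k + 1) - 1) / 2 = k := by omega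
      rw [e4]; push_cast; ring
  · have e1 : (2 * k + 1 + 2 * s) / 2 = k + s := by omega
    have e2 : (2 * k + 1 + 2 * s - 1) / 2 = k + s := by omega
    have e3 : (2 * k + 1) / 2 = k := by omega
    have e4 : (2 * k + 1 - 1) / 2 = k := by omega
    rw [e1, e2, e3, e4]; push_cast; ring

lemma card_shift (m a b : ℕ) :
    ((triT m).image (fun p => (p.1 + a, p.2 + b))).card = (triT m).card := by
  apply Finset.card_image_of_injective
  rintro ⟨x, y⟩ ⟨u, v⟩ h
  simpa using h

lemma mem_shift (m a b : ℕ) (p : ℕ × ℕ) :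
    p ∈ (triT m).image (fun p => (p.1 + a, p.2 + b)) ↔
      a < p.1 ∧ b < p.2 ∧ p.1 + 2 * p.2 ≤ m + a + 2 * b := by
  rw [Finset.mem_image]
  constructor
  · rintro ⟨q, hq, rfl⟩
    have := (mem_triT m q).1 hq
    dsimp only
    omega
  · rintro h
    refine ⟨(p.1 - a, p.2 - b), (mem_triT m _).2 ?_, ?_⟩
    · dsimp only
      omega
    · ext <;> dsimp only <;> omega

/-- For `1 ≤ s ≤ t ≤ n` with `2s + t ≥ n`, `t ≥ 2s`, `3s ≤ t`, the number of
monochromatic triples `(x, y, x+2y)` under the coloring `R^s B^(t-s) R^(n-t)` is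
`⌊s/2⌋⌊(s−1)/2⌋ + ⌊(n−t)/2⌋⌊(n−t−1)/2⌋ + ⌊(t−s)/2⌋⌊(t−s−1)/2⌋ + 2s² − st + s`. -/
theorem genCount_two_formula (n s t : ℕ) (hs : 1 ≤ s) (hst : s ≤ t) (htn : t ≤ n)
    (h1 : n ≤ 2 * s + t) (h2 : 2 * s ≤ t) (h3 : 3 * s ≤ t) :
    (genCount 2 n s t : ℤ) =
      ((s / 2 : ℕ) : ℤ) * (((s - 1) / 2 : ℕ) : ℤ) +
      (((n - t) / 2 : ℕ) : ℤ) * (((n - t - 1) / 2 : ℕ) : ℤ) +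
      (((t - s) / 2 : ℕ) : ℤ) * (((t - s - 1) / 2 : ℕ) : ℤ) +
      2 * (s : ℤ) ^ 2 - (s : ℤ) * (t : ℤ) + (s : ℤ) := by
  have key : genCount 2 n s t = (triT s).card + (triT (n - t)).card + (triT (t - 3 * s)).card := by
    rw [← card_shift (n - t) t 0, ← card_shift (t - 3 * s) s s]
    rw [← Finset.card_union_of_disjoint, ← Finset.card_union_of_disjoint]
    · unfold genCount
      congr 1
      ext p
      simp only [Finset.mem_union, mem_shift, mem_triT, Finset.mem_filter, Finset.mem_product,
        Finset.mem_Icc]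
      omega
    · rw [Finset.disjoint_left]
      intro p hp hq
      simp only [Finset.mem_union, mem_shift, mem_triT] at hp hq
      omega
    · rw [Finset.disjoint_left]
      intro p hp hq
      simp only [mem_shift, mem_triT] at hp hq
      omega
  rw [key]
  push_cast [triT_card]
  have h := triT_shift (t - 3 * s) s hs
  have e : t - 3 * s + 2 * s = t - s := by omega
  rw [e, Nat.cast_sub h3] at h
  push_cast at h ⊢
  linarith
end

section
/- For every n ∈ ℕ with n ≥ 1, the minimal number of monochromatic generalized Schur triples of the form (x, y, x + 2y) that can be attained under any 2-coloring of [n] of the block form R^s B^{t−s} R^{n−t} is M⁽²⁾(n) = ⌊(n² − 10n + 33)/44⌋; that is, min over 1 ≤ s ≤ t ≤ n of M⁽²⁾(n,s,t) equals ⌊(n² − 10n + 33)/44⌋. -/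
def triS (m : ℕ) : Finset (ℕ × ℕ) :=
  (Finset.Icc 1 m ×ˢ Finset.Icc 1 m).filter (fun p => p.1 + 2 * p.2 ≤ m)

theorem mem_triS (m : ℕ) (p : ℕ × ℕ) :
    p ∈ triS m ↔ 1 ≤ p.1 ∧ 1 ≤ p.2 ∧ p.1 + 2 * p.2 ≤ m := by
  simp only [triS, Finset.mem_filter, Finset.mem_product, Finset.mem_Icc]
  omega

theorem card_triS (m : ℕ) : (triS m).card = ((m - 1) / 2) * (m / 2) := by
  induction m with
  | zero => rfl
  | succ m ih =>
    have h : triS (m + 1) = triS m ∪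
        (Finset.Icc 1 (m / 2)).image (fun y => (m + 1 - 2 * y, y)) := by
      ext ⟨x, y⟩
      simp only [mem_triS, Finset.mem_union, Finset.mem_image, Finset.mem_Icc, Prod.mk.injEq]
      constructor
      · intro h
        by_cases h2 : x + 2 * y ≤ m
        · left; omega
        · right; exact ⟨y, by omega, by omega, rfl⟩
      · rintro (h | ⟨a, h1, h2, rfl⟩) <;> omega
    have hd : Disjoint (triS m) ((Finset.Icc 1 (m / 2)).image (fun y => (m + 1 - 2 * y, y))) := by
      rw [Finset.disjoint_left]
      rintro ⟨x, y⟩ h1 h2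
      simp only [mem_triS, Finset.mem_image, Finset.mem_Icc, Prod.mk.injEq] at h1 h2
      obtain ⟨a, h2, h3, rfl⟩ := h2
      omega
    rw [h, Finset.card_union_of_disjoint hd, ih, Finset.card_image_of_injective]
    · simp only [Nat.card_Icc]
      rcases Nat.even_or_odd' m with ⟨k, rfl | rfl⟩
      · rcases k with _ | k
        · rfl
        have e1 : (2 * (k + 1) - 1) / 2 = k := by omega
        have e2 : (2 * (k + 1)) / 2 = k + 1 := by omega
        have e3 : (2 * (k + 1) + 1 - 1) / 2 = k + 1 := by omega
        have e4 : (2 * (k + 1) + 1) / 2 = k + 1 := by omega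
        rw [e1, e2, e3, e4, Nat.add_sub_cancel]; ring
      · have e1 : (2 * k + 1 - 1) / 2 = k := by omega
        have e2 : (2 * k + 1) / 2 = k := by omega
        have e3 : (2 * k + 1 + 1 - 1) / 2 = k := by omega
        have e4 : (2 * k + 1 + 1) / 2 = k + 1 := by omega
        rw [e1, e2, e3, e4, Nat.add_sub_cancel]; ring
    · intro a b hab
      simp only [Prod.mk.injEq] at hab
      exact hab.2

theorem card_triS_lb (m : ℕ) (hm : 1 ≤ m) :
    ((m : ℤ) - 1) ^ 2 ≤ 4 * ((triS m).card : ℤ) + 1 := by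
  rw [card_triS]
  rcases Nat.even_or_odd' m with ⟨k, rfl | rfl⟩
  · obtain ⟨k, rfl⟩ : ∃ j, k = j + 1 := ⟨k - 1, by omega⟩
    have e1 : (2 * (k + 1) - 1) / 2 = k := by omega
    have e2 : (2 * (k + 1)) / 2 = k + 1 := by omega
    rw [e1, e2]; push_cast; nlinarith
  · have e1 : (2 * k + 1 - 1) / 2 = k := by omega
    have e2 : (2 * k + 1) / 2 = k := by omega
    rw [e1, e2]; push_cast; nlinarith

def trapS (s d : ℕ) : Finset (ℕ × ℕ) :=
  (triS d).filter (fun p => p.2 ≤ s)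

theorem card_trapS_lb (s d : ℕ) (h : 2 * s ≤ d) :
    (s : ℤ) * (d - s - 1) ≤ ((trapS s d).card : ℤ) := by
  induction s with
  | zero => simp
  | succ s ih =>
    have ih := ih (by omega)
    have hs : trapS s d ∪ (Finset.Icc 1 (d - 2 * (s + 1))).image (fun x => (x, s + 1))
        ⊆ trapS (s + 1) d := by
      rintro ⟨x, y⟩
      simp only [trapS, mem_triS, Finset.mem_union, Finset.mem_filter, Finset.mem_image,
        Finset.mem_Icc, Prod.mk.injEq]
      rintro (h | ⟨a, h1, rfl, rfl⟩) <;> omega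
    have hd : Disjoint (trapS s d)
        ((Finset.Icc 1 (d - 2 * (s + 1))).image (fun x => (x, s + 1))) := by
      rw [Finset.disjoint_left]
      rintro ⟨x, y⟩ h1 h2
      simp only [trapS, mem_triS, Finset.mem_filter, Finset.mem_image, Finset.mem_Icc,
        Prod.mk.injEq] at h1 h2
      obtain ⟨a, h2, h3, rfl⟩ := h2
      omega
    have hc := Finset.card_le_card hs
    rw [Finset.card_union_of_disjoint hd, Finset.card_image_of_injective] at hc
    · simp only [Nat.card_Icc, Nat.add_sub_cancel] at hc
      have hc' : ((trapS s d).card : ℤ) + (d - 2 * (s + 1)) ≤ ((trapS (s + 1) d).card : ℤ) := by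
        omega
      push_cast
      nlinarith
    · intro a b hab
      simp only [Prod.mk.injEq] at hab
      exact hab.1

def sqF (n : ℕ) (P : ℕ × ℕ → Prop) [DecidablePred P] : ℕ :=
  ((Finset.Icc 1 n ×ˢ Finset.Icc 1 n).filter P).card

theorem genCount_ge (n s t : ℕ) (hst : s ≤ t) :
    sqF n (fun p => p.1 + 2 * p.2 ≤ n ∧ p.1 + 2 * p.2 ≤ s) +
    sqF n (fun p => p.1 + 2 * p.2 ≤ n ∧ t < p.1 ∧ p.2 ≤ s) +
    sqF n (fun p => p.1 + 2 * p.2 ≤ n ∧ t < p.1 ∧ t < p.2) +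
    sqF n (fun p => p.1 + 2 * p.2 ≤ t ∧ p.1 + 2 * p.2 ≤ n ∧ s < p.1 ∧ s < p.2) +
    sqF n (fun p => p.1 + 2 * p.2 ≤ n ∧ p.1 ≤ s ∧ p.2 ≤ s ∧ t < p.1 + 2 * p.2)
    ≤ genCount 2 n s t := by
  unfold sqF genCount
  simp only [Finset.card_filter]
  rw [← Finset.sum_add_distrib, ← Finset.sum_add_distrib, ← Finset.sum_add_distrib,
    ← Finset.sum_add_distrib]
  apply Finset.sum_le_sum
  rintro ⟨x, y⟩ h
  simp only
  simp only [Finset.mem_product, Finset.mem_Icc] at h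
  split_ifs <;> omega

theorem sqF_ge (n : ℕ) (P : ℕ × ℕ → Prop) [DecidablePred P] (S : Finset (ℕ × ℕ))
    (f : ℕ × ℕ → ℕ × ℕ)
    (h1 : ∀ p ∈ S, (1 ≤ (f p).1 ∧ (f p).1 ≤ n ∧ 1 ≤ (f p).2 ∧ (f p).2 ≤ n) ∧ P (f p))
    (h2 : ∀ p ∈ S, ∀ r ∈ S, f p = f r → p = r) : S.card ≤ sqF n P := by
  unfold sqF
  apply Finset.card_le_card_of_injOn f
  · intro p hp
    have := h1 p hp
    simp only [Finset.coe_filter, Set.mem_ofPred_eq, Finset.mem_product, Finset.mem_Icc]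
    refine ⟨⟨⟨?_, ?_⟩, ?_, ?_⟩, this.2⟩ <;> omega
  · intro p hp r hr h
    exact h2 p hp r hr h

theorem shift_ge (n a b m : ℕ) (P : ℕ × ℕ → Prop) [DecidablePred P] (S : Finset (ℕ × ℕ))
    (h1 : ∀ x y, (x, y) ∈ S → (1 ≤ x + a ∧ x + a ≤ n ∧ 1 ≤ y + b ∧ y + b ≤ n) ∧ P (x + a, y + b)) :
    S.card ≤ sqF n P := by
  apply sqF_ge n P S (fun p => (p.1 + a, p.2 + b))
  · rintro ⟨x, y⟩ h; exact h1 x y h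
  · rintro ⟨x, y⟩ _ ⟨x', y'⟩ _ h
    simp only [Prod.mk.injEq] at h ⊢
    omega

theorem lower (n s t : ℕ) (hs : 1 ≤ s) (hst : s ≤ t) (htn : t ≤ n) :
    ((n : ℤ) - 5) ^ 2 ≤ 44 * (genCount 2 n s t : ℤ) + 35 := by
  have hG := genCount_ge n s t hst
  set A := sqF n (fun p => p.1 + 2 * p.2 ≤ n ∧ p.1 + 2 * p.2 ≤ s) with hA
  set D := sqF n (fun p => p.1 + 2 * p.2 ≤ n ∧ t < p.1 ∧ p.2 ≤ s) with hD
  set E := sqF n (fun p => p.1 + 2 * p.2 ≤ n ∧ t < p.1 ∧ t < p.2) with hE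
  set F := sqF n (fun p => p.1 + 2 * p.2 ≤ t ∧ p.1 + 2 * p.2 ≤ n ∧ s < p.1 ∧ s < p.2) with hF
  set B := sqF n (fun p => p.1 + 2 * p.2 ≤ n ∧ p.1 ≤ s ∧ p.2 ≤ s ∧ t < p.1 + 2 * p.2) with hB
  have kA : ((s : ℤ) - 1) ^ 2 ≤ 4 * (A : ℤ) + 1 := by
    have h : (triS s).card ≤ A := by
      apply shift_ge n 0 0 s
      intro x y h
      simp only [mem_triS] at h
      constructor <;> omega
    have := card_triS_lb s hs
    have h' : ((triS s).card : ℤ) ≤ A := by exact_mod_cast h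
    linarith
  have kD1 : n ≤ t + 2 * s + 2 → ((n : ℤ) - t - 1) ^ 2 ≤ 4 * (D : ℤ) + 1 := by
    intro hh
    obtain ⟨d, rfl⟩ := Nat.exists_eq_add_of_le htn
    rcases Nat.eq_zero_or_pos d with rfl | hd
    · push_cast; ring_nf; omega
    have h : (triS d).card ≤ D := by
      apply shift_ge (t + d) t 0 d
      intro x y h
      simp only [mem_triS] at h
      constructor <;> omega
    have := card_triS_lb d hd
    have h' : ((triS d).card : ℤ) ≤ D := by exact_mod_cast h
    push_cast
    ring_nf at this ⊢
    linarith
  have kD2 : t + 2 * s + 3 ≤ n → (s : ℤ) * ((n : ℤ) - t - s - 1) ≤ D := by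
    intro hh
    obtain ⟨d, rfl⟩ := Nat.exists_eq_add_of_le htn
    have h : (trapS s d).card ≤ D := by
      apply shift_ge (t + d) t 0 d
      intro x y h
      simp only [trapS, Finset.mem_filter, mem_triS] at h
      constructor <;> omega
    have := card_trapS_lb s d (by omega)
    have h' : ((trapS s d).card : ℤ) ≤ D := by exact_mod_cast h
    push_cast
    ring_nf at this ⊢
    linarith
  have kE : 3 * t + 1 ≤ n → ((n : ℤ) - 3 * t - 1) ^ 2 ≤ 4 * (E : ℤ) + 1 := by
    intro hh
    obtain ⟨d, rfl⟩ := Nat.exists_eq_add_of_le (show 3 * t ≤ n by omega)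
    have h : (triS d).card ≤ E := by
      apply shift_ge _ t t d
      intro x y h
      simp only [mem_triS] at h
      constructor <;> omega
    have := card_triS_lb d (by omega)
    have h' : ((triS d).card : ℤ) ≤ E := by exact_mod_cast h
    push_cast
    ring_nf at this ⊢
    linarith
  have kV : 3 * s ≤ n → 2 * s ≤ t → ((t : ℤ) - 3 * s - 1) ^ 2 ≤ 4 * ((F : ℤ) + B) + 1 := by
    intro hh h2
    by_cases h3 : 3 * s + 1 ≤ t
    · obtain ⟨d, hd⟩ := Nat.exists_eq_add_of_le (show 3 * s ≤ t by omega)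
      have h : (triS d).card ≤ F := by
        apply shift_ge _ s s d
        intro x y h
        simp only [mem_triS] at h
        constructor <;> omega
      have := card_triS_lb d (by omega)
      have h' : ((triS d).card : ℤ) ≤ F := by exact_mod_cast h
      have e : (t : ℤ) - 3 * s - 1 = d - 1 := by omega
      rw [e]
      have : (0 : ℤ) ≤ B := by positivity
      linarith
    · obtain ⟨d, hd⟩ := Nat.exists_eq_add_of_le (show t ≤ 3 * s by omega)
      have h : (triS (d + 2)).card ≤ B := by
        apply sqF_ge _ _ _ (fun p => (s + 1 - p.1, s + 1 - p.2))
        · rintro ⟨x, y⟩ h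
          simp only [mem_triS] at h
          constructor <;> dsimp only <;> omega
        · rintro ⟨x, y⟩ h ⟨x', y'⟩ h' he
          simp only [mem_triS, Prod.mk.injEq] at h h' he ⊢
          omega
      have := card_triS_lb (d + 2) (by omega)
      have h' : ((triS (d + 2)).card : ℤ) ≤ B := by exact_mod_cast h
      have e : (t : ℤ) - 3 * s - 1 = -(((d + 2 : ℕ) : ℤ) - 1) := by push_cast; omega
      rw [e, neg_sq]
      have : (0 : ℤ) ≤ F := by positivity
      linarith
  have hG' : (A : ℤ) + D + E + F + B ≤ genCount 2 n s t := by exact_mod_cast hG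
  generalize (genCount 2 n s t : ℤ) = G at *
  have pA : (0 : ℤ) ≤ A := by positivity
  have pB : (0 : ℤ) ≤ B := by positivity
  have pD : (0 : ℤ) ≤ D := by positivity
  have pE : (0 : ℤ) ≤ E := by positivity
  have pF : (0 : ℤ) ≤ F := by positivity
  clear_value A B D E F
  clear hA hB hD hE hF hG
  zify at *
  generalize (A : ℤ) = A at *
  generalize (B : ℤ) = B at *
  generalize (D : ℤ) = D at *
  generalize (E : ℤ) = E at *
  generalize (F : ℤ) = F at *
  generalize (n : ℤ) = n at *
  generalize (s : ℤ) = s at *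
  generalize (t : ℤ) = t at *
  by_cases c0 : 3 * s ≤ n
  swap
  · push Not at c0
    nlinarith
  by_cases c1 : n ≤ t + 2 * s + 2
  · have kD := kD1 c1
    by_cases c2 : 2 * s ≤ t
    · have kV := kV c0 c2
      nlinarith [sq_nonneg ((s - 1) - 3 * (t - 3 * s - 1)), sq_nonneg ((s - 1) - 3 * (n - t - 1)),
        sq_nonneg ((n - t - 1) - (t - 3 * s - 1))]
    · have h5 : (n - 2 * s) ^ 2 ≤ (n - t - 1) ^ 2 := by
        apply pow_le_pow_left₀ <;> omega
      nlinarith [sq_nonneg ((s - 1) - 2 * (n - 2 * s))]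
  have kD := kD2 (by omega)
  push Not at c1
  by_cases c2 : 2 * s ≤ t
  · have kV := kV c0 c2
    by_cases c3 : 3 * t + 1 ≤ n
    · have kE := kE c3
      have key : (n - 5) ^ 2 ≤ 11 * (((s - 1) ^ 2 - 1) + 4 * (s * (n - t - s - 1)) +
          ((t - 3 * s - 1) ^ 2 - 1) + ((n - 3 * t - 1) ^ 2 - 1)) + 35 := by
        have p1 : 0 ≤ (s - 1) * (n - 3 * t - 1) := mul_nonneg (by linarith) (by linarith)
        by_cases c4 : 3 * s ≤ t
        · have p2 : 0 ≤ (t - 3 * s) * s := mul_nonneg (by linarith) (by linarith)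
          nlinarith [sq_nonneg (2 * (t - 3 * s) - 3 * (n - 3 * t)), sq_nonneg (n - 3 * t)]
        · have p2 : 0 ≤ (t - 2 * s) * s := mul_nonneg (by linarith) (by linarith)
          have p3 : 0 ≤ (3 * s - t) * (n - 3 * t - 1) := mul_nonneg (by linarith) (by linarith)
          nlinarith [sq_nonneg (t - 3 * s), sq_nonneg (n - 3 * t - 1)]
      linarith
    · have key : (n - 5) ^ 2 ≤ 11 * (((s - 1) ^ 2 - 1) + 4 * (s * (n - t - s - 1)) +
          ((t - 3 * s - 1) ^ 2 - 1)) + 35 := by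
        have p1 : 0 ≤ (n - t - (2 * s + 3)) * (3 * t - n) := mul_nonneg (by linarith) (by linarith)
        have p2 : 0 ≤ (t - 2 * s) * s := mul_nonneg (by linarith) (by linarith)
        by_cases c4 : 0 ≤ 30 * s - 4 * (t - 3 * s) + 7
        · have p3 := mul_nonneg c4 (show 0 ≤ n - t - (2 * s + 3) by linarith)
          nlinarith [sq_nonneg (2 * (t - 3 * s) - s), sq_nonneg ((t - 3 * s))]
        · have p3 : 0 ≤ (-(30 * s - 4 * (t - 3 * s) + 7)) * (3 * t - n) := mul_nonneg (by linarith) (by linarith)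
          nlinarith [sq_nonneg (t - 3 * s)]
      linarith
  · by_cases c3 : 3 * t + 1 ≤ n
    · have kE := kE c3
      have key : (n - 5) ^ 2 ≤ 11 * (((s - 1) ^ 2 - 1) + 4 * (s * (n - t - s - 1)) +
          ((n - 3 * t - 1) ^ 2 - 1)) + 35 := by
        push Not at c2
        have p1 : 0 ≤ (t - s) * (2 * s - 1 - t) := mul_nonneg (by linarith) (by linarith)
        have p2 : 0 ≤ (t - s) * (s - 1) := mul_nonneg (by linarith) (by linarith)
        have p3 : 0 ≤ (n - 3 * t - 1) * (s - 1) := mul_nonneg (by linarith) (by linarith)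
        have p4 : 0 ≤ (n - 3 * t - 1) * (t - s) := mul_nonneg (by linarith) (by linarith)
        have p5 : 0 ≤ (n - 3 * t - 1) * (2 * s - 1 - t) := mul_nonneg (by linarith) (by linarith)
        nlinarith [sq_nonneg (n - 3 * t - 1)]
      linarith
    · have key : (n - 5) ^ 2 ≤ 11 * (((s - 1) ^ 2 - 1) + 4 * (s * (n - t - s - 1))) + 35 := by
        push Not at c2
        have p1 : 0 ≤ (n - t - (2 * s + 3)) * (3 * t - n) := mul_nonneg (by linarith) (by linarith)
        have p2 : 0 ≤ (t - s) * (2 * s - 1 - t) := mul_nonneg (by linarith) (by linarith)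
        have p3 : 0 ≤ (n - t - (2 * s + 3)) * (2 * s - 1 - t) := mul_nonneg (by linarith) (by linarith)
        nlinarith
      linarith

theorem upper (n s t : ℕ) (h3 : 3 * s ≤ t) (htn : t ≤ n) (h4 : n ≤ t + 2 * s + 2) :
    genCount 2 n s t ≤ ((s - 1) / 2) * (s / 2) + ((t - 3 * s - 1) / 2) * ((t - 3 * s) / 2)
      + ((n - t - 1) / 2) * ((n - t) / 2) := by
  rw [← card_triS, ← card_triS, ← card_triS]
  unfold genCount
  refine le_trans (Finset.card_le_card (t := triS s ∪
    (triS (t - 3 * s)).image (fun p => (p.1 + s, p.2 + s)) ∪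
    (triS (n - t)).image (fun p => (p.1 + t, p.2))) ?_) ?_
  · rintro ⟨x, y⟩ h
    simp only [Finset.mem_filter, Finset.mem_product, Finset.mem_Icc] at h
    simp only [Finset.mem_union, Finset.mem_image, mem_triS, Prod.mk.injEq, Prod.exists]
    by_cases h1 : x + 2 * y ≤ s
    · left; left; omega
    by_cases h2 : t < x
    · right
      exact ⟨x - t, y, by omega, by omega, by omega⟩
    · left; right
      exact ⟨x - s, y - s, by omega, by omega, by omega⟩
  · refine le_trans (Finset.card_union_le _ _) ?_
    have := Finset.card_union_le (triS s) ((triS (t - 3 * s)).image (fun p => (p.1 + s, p.2 + s)))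
    have h1 := Finset.card_image_le (s := triS (t - 3 * s)) (f := fun p => (p.1 + s, p.2 + s))
    have h2 := Finset.card_image_le (s := triS (n - t)) (f := fun p => (p.1 + t, p.2))
    omega

theorem attain (n : ℕ) (hn : 3 ≤ n) : ∃ s t : ℕ, 1 ≤ s ∧ s ≤ t ∧ t ≤ n ∧
    44 * (genCount 2 n s t : ℤ) ≤ ((n : ℤ) - 5) ^ 2 + 8 := by
  obtain ⟨k, r, hr, hr', rfl⟩ : ∃ k r, 3 ≤ r ∧ r ≤ 24 ∧ n = 22 * k + r :=
    ⟨(n - 3) / 22, (n - 3) % 22 + 3, by omega, by omega, by omega⟩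
  have key : ∀ c d : ℕ, 1 ≤ c → 3 * c ≤ d → d ≤ r → r ≤ d + 2 * c + 2 →
      (44 * ((((6 * k + c) - 1) / 2 * ((6 * k + c) / 2) + (2 * k + (d - 3 * c) - 1) / 2 *
        ((2 * k + (d - 3 * c)) / 2) + (2 * k + (r - d) - 1) / 2 * ((2 * k + (r - d)) / 2) : ℕ) : ℤ)
        ≤ (((22 * k + r : ℕ) : ℤ) - 5) ^ 2 + 8) →
      ∃ s t : ℕ, 1 ≤ s ∧ s ≤ t ∧ t ≤ 22 * k + r ∧
        44 * (genCount 2 (22 * k + r) s t : ℤ) ≤ (((22 * k + r : ℕ) : ℤ) - 5) ^ 2 + 8 := by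
    intro c d h1 h2 h3 h4 h5
    refine ⟨6 * k + c, 20 * k + d, by omega, by omega, by omega, ?_⟩
    have hu := upper (22 * k + r) (6 * k + c) (20 * k + d) (by omega) (by omega) (by omega)
    have x1 : 20 * k + d - 3 * (6 * k + c) = 2 * k + (d - 3 * c) := by omega
    have x2 : 22 * k + r - (20 * k + d) = 2 * k + (r - d) := by omega
    rw [x1, x2] at hu
    have hu' := Int.ofNat_le.mpr hu
    linarith
  have mk : ∀ m c : ℕ, (2 * m + (2 * c + 1) - 1) / 2 * ((2 * m + (2 * c + 1)) / 2)
      = (m + c) * (m + c) := by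
    intro m c
    congr 1 <;> omega
  have mk2 : ∀ m c : ℕ, (2 * m + (2 * c + 2) - 1) / 2 * ((2 * m + (2 * c + 2)) / 2)
      = (m + c) * (m + c + 1) := by
    intro m c
    congr 1 <;> omega
  have mk0 : ∀ m : ℕ, ((((2 * m + 0) - 1) / 2 * ((2 * m + 0) / 2) : ℕ) : ℤ) = (m - 1) * m := by
    intro m
    rcases m with _ | m
    · simp
    have y1 : (2 * (m + 1) + 0 - 1) / 2 = m := by omega
    have y2 : (2 * (m + 1) + 0) / 2 = m + 1 := by omega
    rw [y1, y2]; push_cast; ring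
  have e6 : 6 * k = 2 * (3 * k) := by ring
  rw [e6] at key
  have tri : ∀ m x : ℕ, ∃ v : ℤ, (((2 * m + x - 1) / 2 * ((2 * m + x) / 2) : ℕ) : ℤ) = v ∧
      4 * v = (2 * m + x - 1) ^ 2 - (if x % 2 = 0 then 1 else 0) := by
    intro m x
    refine ⟨_, rfl, ?_⟩
    rcases Nat.even_or_odd' x with ⟨c, rfl | rfl⟩
    · rcases c with _ | c
      · rw [mk0]; simp; ring
      · rw [show 2 * (c + 1) = 2 * c + 2 by ring, mk2]
        simp; ring
    · rw [mk, if_neg (by omega)]; push_cast; ring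
  have key2 : ∀ c d : ℕ, 1 ≤ c → 3 * c ≤ d → d ≤ r → r ≤ d + 2 * c + 2 →
      11 * ((2 * (3 * k : ℤ) + c - 1) ^ 2 - (if c % 2 = 0 then 1 else 0) +
        ((2 * (k : ℤ) + (d - 3 * c : ℕ) - 1) ^ 2 - (if (d - 3 * c) % 2 = 0 then 1 else 0)) +
        ((2 * (k : ℤ) + (r - d : ℕ) - 1) ^ 2 - (if (r - d) % 2 = 0 then 1 else 0)))
        ≤ (((22 * k + r : ℕ) : ℤ) - 5) ^ 2 + 8 →
      ∃ s t : ℕ, 1 ≤ s ∧ s ≤ t ∧ t ≤ 22 * k + r ∧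
        44 * (genCount 2 (22 * k + r) s t : ℤ) ≤ (((22 * k + r : ℕ) : ℤ) - 5) ^ 2 + 8 := by
    intro c d h1 h2 h3 h4 h5
    refine key c d h1 h2 h3 h4 ?_
    obtain ⟨v1, g1, i1⟩ := tri (3 * k) c
    obtain ⟨v2, g2, i2⟩ := tri k (d - 3 * c)
    obtain ⟨v3, g3, i3⟩ := tri k (r - d)
    rw [Nat.cast_add, Nat.cast_add, g1, g2, g3]
    push_cast at i1 i2 i3 h5 ⊢
    linarith
  clear key tri mk mk0 mk2
  interval_cases r
  · refine key2 1 3 (by norm_num) (by norm_num) (by norm_num) (by norm_num) ?_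
    norm_num; nlinarith
  · refine key2 1 4 (by norm_num) (by norm_num) (by norm_num) (by norm_num) ?_
    norm_num; nlinarith
  · refine key2 1 5 (by norm_num) (by norm_num) (by norm_num) (by norm_num) ?_
    norm_num; nlinarith
  · refine key2 2 6 (by norm_num) (by norm_num) (by norm_num) (by norm_num) ?_
    norm_num; nlinarith
  · refine key2 2 7 (by norm_num) (by norm_num) (by norm_num) (by norm_num) ?_
    norm_num; nlinarith
  · refine key2 2 8 (by norm_num) (by norm_num) (by norm_num) (by norm_num) ?_
    norm_num; nlinarith
  · refine key2 2 8 (by norm_num) (by norm_num) (by norm_num) (by norm_num) ?_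
    norm_num; nlinarith
  · refine key2 2 8 (by norm_num) (by norm_num) (by norm_num) (by norm_num) ?_
    norm_num; nlinarith
  · refine key2 3 11 (by norm_num) (by norm_num) (by norm_num) (by norm_num) ?_
    norm_num; nlinarith
  · refine key2 3 11 (by norm_num) (by norm_num) (by norm_num) (by norm_num) ?_
    norm_num; nlinarith
  · refine key2 3 11 (by norm_num) (by norm_num) (by norm_num) (by norm_num) ?_
    norm_num; nlinarith
  · refine key2 4 14 (by norm_num) (by norm_num) (by norm_num) (by norm_num) ?_
    norm_num; nlinarith
  · refine key2 4 14 (by norm_num) (by norm_num) (by norm_num) (by norm_num) ?_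
    norm_num; nlinarith
  · refine key2 4 14 (by norm_num) (by norm_num) (by norm_num) (by norm_num) ?_
    norm_num; nlinarith
  · refine key2 4 15 (by norm_num) (by norm_num) (by norm_num) (by norm_num) ?_
    norm_num; nlinarith
  · refine key2 5 17 (by norm_num) (by norm_num) (by norm_num) (by norm_num) ?_
    norm_num; nlinarith
  · refine key2 5 17 (by norm_num) (by norm_num) (by norm_num) (by norm_num) ?_
    norm_num; nlinarith
  · refine key2 5 18 (by norm_num) (by norm_num) (by norm_num) (by norm_num) ?_
    norm_num; nlinarith
  · refine key2 6 20 (by norm_num) (by norm_num) (by norm_num) (by norm_num) ?_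
    norm_num; nlinarith
  · refine key2 6 20 (by norm_num) (by norm_num) (by norm_num) (by norm_num) ?_
    norm_num; nlinarith
  · refine key2 6 21 (by norm_num) (by norm_num) (by norm_num) (by norm_num) ?_
    norm_num; nlinarith
  · refine key2 6 22 (by norm_num) (by norm_num) (by norm_num) (by norm_num) ?_
    norm_num; nlinarith

theorem min_genCount_two (n : ℕ) (hn : 1 ≤ n) :
    (∀ s t : ℕ, 1 ≤ s → s ≤ t → t ≤ n →
      ((n : ℤ) ^ 2 - 10 * n + 33) / 44 ≤ (genCount 2 n s t : ℤ)) ∧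
    (∃ s t : ℕ, 1 ≤ s ∧ s ≤ t ∧ t ≤ n ∧
      (genCount 2 n s t : ℤ) = ((n : ℤ) ^ 2 - 10 * n + 33) / 44) := by
  have e : (n : ℤ) ^ 2 - 10 * n + 33 = ((n : ℤ) - 5) ^ 2 + 8 := by ring
  rw [e]
  refine ⟨?_, ?_⟩
  · intro s t h1 h2 h3
    have := lower n s t h1 h2 h3
    omega
  · by_cases h : 3 ≤ n
    · obtain ⟨s, t, h1, h2, h3, h4⟩ := attain n h
      refine ⟨s, t, h1, h2, h3, ?_⟩
      have := lower n s t h1 h2 h3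
      omega
    · refine ⟨1, 1, le_refl _, le_refl _, hn, ?_⟩
      have : n = 1 ∨ n = 2 := by omega
      rcases this with rfl | rfl <;> decide
end

section
/- For every n ∈ ℕ with n ≥ 1, the minimal number of monochromatic generalized Schur triples of the form (x, y, x + 4y) that can be attained under any 2-coloring of [n] of the block form R^s B^{t−s} R^{n−t} is M⁽⁴⁾(n) = ⌊(n² − 28n + 245)/216⌋ − c(n), where c(n) = 1 if n mod 108 belongs to the set I = {0, 1, 27, 28, 43, 47, 48, 53, 58, 63, 67, 68, 69, 73, 78, 83, 88, 89, 93}, and c(n) = 0 otherwise. -/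
/-- The correction term for `a = 4`: `1` if `n mod 108` lies in the exceptional
set `I = {0, 1, 27, 28, 43, 47, 48, 53, 58, 63, 67, 68, 69, 73, 78, 83, 88, 89, 93}`,
and `0` otherwise. -/
def corr4 (n : ℕ) : ℤ :=
  if n % 108 ∈ [0, 1, 27, 28, 43, 47, 48, 53, 58, 63, 67, 68, 69, 73, 78,
      83, 88, 89, 93] then 1 else 0

open Finset

/-- closed form -/
def fZ (m : ℤ) : ℤ := 2 * (m / 4) * (m / 4 - 1) + (m / 4) * (m % 4)

def gN (m K : ℕ) : ℕ := ∑ i ∈ Finset.range K, (m - 4 * (i + 1))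

lemma gN_eq (K : ℕ) : ∀ m : ℕ, m ≤ 4 * K + 4 → (gN m K : ℤ) = fZ m := by
  have small : ∀ m K : ℕ, m ≤ 4 → (gN m K : ℤ) = fZ m := by
    intro m K hm
    have h0 : gN m K = 0 := by
      unfold gN
      apply Finset.sum_eq_zero
      intro i _
      omega
    rw [h0]
    interval_cases m <;> simp [fZ]
  induction K with
  | zero => intro m hm; exact small m 0 (by omega)
  | succ K ih =>
    intro m hm
    by_cases h4 : m ≤ 4
    · exact small m _ h4
    obtain ⟨m', rfl⟩ : ∃ m', m = m' + 4 := ⟨m - 4, by omega⟩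
    have h1 : gN (m' + 4) (K + 1) = gN m' K + m' := by
      unfold gN
      rw [Finset.sum_range_succ']
      congr 1
      apply Finset.sum_congr rfl
      intro i _
      omega
    rw [h1]
    push_cast
    rw [ih m' (by omega)]
    unfold fZ
    have e1 : ((m' : ℤ) + 4) / 4 = m' / 4 + 1 := by omega
    have e2 : ((m' : ℤ) + 4) % 4 = m' % 4 := by omega
    have e3 : (m' : ℤ) = 4 * (m' / 4) + m' % 4 := by omega
    rw [e1, e2]
    nth_rewrite 5 [e3]
    ring

lemma fZ_eight (m : ℤ) : ∃ d : ℤ, 0 ≤ d ∧ d ≤ 4 ∧ 8 * fZ m = (m - 2) ^ 2 - d := by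
  refine ⟨(m % 4 - 2) ^ 2, by positivity, ?_, ?_⟩
  · have : m % 4 = 0 ∨ m % 4 = 1 ∨ m % 4 = 2 ∨ m % 4 = 3 := by omega
    rcases this with h | h | h | h <;> rw [h] <;> norm_num
  · unfold fZ
    have e3 : m = 4 * (m / 4) + m % 4 := by omega
    nth_rewrite 5 [e3]
    ring

lemma fZ_shift (m k : ℤ) : fZ (m + 4 * k) = fZ m + k * m + 2 * k ^ 2 - 2 * k := by
  unfold fZ
  have e1 : (m + 4 * k) / 4 = m / 4 + k := by omega
  have e2 : (m + 4 * k) % 4 = m % 4 := by omega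
  have e3 : m = 4 * (m / 4) + m % 4 := by omega
  rw [e1, e2]
  linear_combination (-k) * e3

lemma gN_mono {m m' : ℕ} (h : m ≤ m') (K : ℕ) : gN m K ≤ gN m' K := by
  unfold gN
  apply Finset.sum_le_sum
  intro i _
  omega

lemma fZ_mono {m m' : ℕ} (h : m ≤ m') : fZ m ≤ fZ m' := by
  rw [← gN_eq m' m (by omega), ← gN_eq m' m' (by omega)]
  exact_mod_cast gN_mono h m'

lemma fZ_nonneg (m : ℕ) : 0 ≤ fZ m := by
  rw [← gN_eq m m (by omega)]; positivity

def tgt (n : ℕ) : ℤ := ((n : ℤ) ^ 2 - 28 * n + 245) / 216 - corr4 n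

lemma corr4_nonneg (n : ℕ) : 0 ≤ corr4 n := by
  unfold corr4; split <;> norm_num

lemma tgt_le (n : ℕ) : 216 * tgt n ≤ (n : ℤ) ^ 2 - 28 * n + 245 := by
  unfold tgt
  have := corr4_nonneg n
  omega

lemma tgt_shift (ρ k : ℕ) :
    tgt (ρ + 108 * k) = tgt ρ + 54 * (k : ℤ) ^ 2 + k * ρ - 14 * k := by
  have h1 : corr4 (ρ + 108 * k) = corr4 ρ := by
    unfold corr4; rw [Nat.add_mul_mod_self_left]
  unfold tgt
  rw [h1]
  have : (((ρ + 108 * k : ℕ) : ℤ) ^ 2 - 28 * ((ρ + 108 * k : ℕ) : ℤ) + 245)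
      = ((ρ : ℤ) ^ 2 - 28 * ρ + 245) + 216 * (54 * (k : ℤ) ^ 2 + k * ρ - 14 * k) := by
    push_cast; ring
  rw [this, Int.add_mul_ediv_left _ _ (by norm_num)]
  ring

lemma core_dec : ∀ ρ < 108, ∀ i < 3, ∀ j < 10,
    tgt ρ ≤ fZ (5 * ((ρ : ℤ) - 14) / 27 + 1 + (i : ℕ)) + fZ (((ρ : ℤ) - 14) / 27 - 2 + (j : ℕ))
      + fZ (ρ - 5 * (5 * ((ρ : ℤ) - 14) / 27 + 1 + (i : ℕ)) - (((ρ : ℤ) - 14) / 27 - 2 + (j : ℕ))) := by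
  unfold tgt corr4 fZ
  decide +kernel

lemma core_res (ρ : ℕ) (hρ : ρ < 108) (a b c : ℤ) (h : 5 * a + b + c = ρ) :
    tgt ρ ≤ fZ a + fZ b + fZ c := by
  by_contra hlt
  push Not at hlt
  have hlt' := hlt
  obtain ⟨d1, h10, h14, h1⟩ := fZ_eight a
  obtain ⟨d2, h20, h24, h2⟩ := fZ_eight b
  obtain ⟨d3, h30, h34, h3⟩ := fZ_eight c
  have ht := tgt_le ρ
  obtain ⟨q, hq⟩ : ∃ q : ℤ, q = 27 * (b - 2) - (ρ - 14) := ⟨_, rfl⟩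
  obtain ⟨r, hr⟩ : ∃ r : ℤ, r = 27 * (c - 2) - (ρ - 14) := ⟨_, rfl⟩
  obtain ⟨p, hp⟩ : ∃ p : ℤ, p = 27 * (a - 2) - 5 * (ρ - 14) := ⟨_, rfl⟩
  have hpqr : 5 * p + q + r = 0 := by rw [hp, hq, hr]; linarith
  have key : p ^ 2 + q ^ 2 + r ^ 2 = 729 * ((a - 2) ^ 2 + (b - 2) ^ 2 + (c - 2) ^ 2) - 27 * ((ρ : ℤ) - 14) ^ 2 := by
    rw [hp, hq, hr, ← h]; ring
  have hb : p ^ 2 + q ^ 2 + r ^ 2 < 10071 := by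
    rw [key]; linarith
  have hr' : r = -5 * p - q := by linarith
  subst hr'
  have hp0 : p ^ 2 < 28 ^ 2 := by linarith [sq_nonneg (5 * p + 2 * q)]
  have hq0 : q ^ 2 < 101 ^ 2 := by linarith [sq_nonneg p, sq_nonneg (-5 * p - q)]
  obtain ⟨hp2, hp1⟩ := abs_lt_of_sq_lt_sq' hp0 (by norm_num)
  obtain ⟨hq2, hq1⟩ := abs_lt_of_sq_lt_sq' hq0 (by norm_num)
  clear key hb hp0 hq0 h1 h2 h3 ht hlt
  obtain ⟨i, hi⟩ : ∃ i : ℕ, a = 5 * ((ρ : ℤ) - 14) / 27 + 1 + (i : ℕ) :=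
    ⟨(a - (5 * ((ρ : ℤ) - 14) / 27 + 1)).toNat, by omega⟩
  obtain ⟨j, hj⟩ : ∃ j : ℕ, b = ((ρ : ℤ) - 14) / 27 - 2 + (j : ℕ) :=
    ⟨(b - (((ρ : ℤ) - 14) / 27 - 2)).toNat, by omega⟩
  have hc : c = ρ - 5 * a - b := by linarith
  have hlt := hlt'
  have := core_dec ρ hρ i (by omega) j (by omega)
  rw [← hi, ← hj, ← hc] at this
  linarith

lemma shift3 (a b c k : ℤ) : fZ (a + 20 * k) + fZ (b + 4 * k) + fZ (c + 4 * k) =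
    fZ a + fZ b + fZ c + 54 * k ^ 2 + k * (5 * a + b + c) - 14 * k := by
  rw [fZ_shift b, fZ_shift c, show a + 20 * k = a + 4 * (5 * k) by ring, fZ_shift a]
  ring

lemma core (n : ℕ) (a b c : ℤ) (h : 5 * a + b + c = n) :
    tgt n ≤ fZ a + fZ b + fZ c := by
  obtain ⟨k, ρ, hρ, rfl⟩ : ∃ k ρ : ℕ, ρ < 108 ∧ n = ρ + 108 * k :=
    ⟨n / 108, n % 108, by omega, by omega⟩
  push_cast at h
  have h1 := core_res ρ hρ (a - 20 * k) (b - 4 * k) (c - 4 * k) (by linarith)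
  have h2 := shift3 (a - 20 * k) (b - 4 * k) (c - 4 * k) k
  simp only [sub_add_cancel] at h2
  rw [h2, tgt_shift]
  have : 5 * (a - 20 * (k : ℤ)) + (b - 4 * k) + (c - 4 * k) = ρ := by linarith
  rw [this]
  linarith

lemma wit_dec : ∀ ρ < 108, ∃ a < 30, ∃ b < 12,
    5 * (a + 1) + b ≤ ρ + 20 ∧ ρ + 20 ≤ 4 * (ρ + 20 - b) + 4 ∧ b ≤ 4 * (a + 1) + 4 ∧
    fZ ((a + 1 : ℕ) : ℤ) + fZ (b : ℕ) + fZ ((ρ + 20 - b - 5 * (a + 1) : ℕ) : ℤ) = tgt (ρ + 20) := by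
  unfold tgt corr4 fZ
  decide +kernel

/-- fiber predicate -/
def fib (n s t y : ℕ) : Finset ℕ := (Finset.Icc 1 n).filter (fun x => x + 4 * y ≤ n ∧
      (((x ≤ s ∨ t < x) ∧ (y ≤ s ∨ t < y) ∧
        (x + 4 * y ≤ s ∨ t < x + 4 * y)) ∨
       ((s < x ∧ x ≤ t) ∧ (s < y ∧ y ≤ t) ∧
        (s < x + 4 * y ∧ x + 4 * y ≤ t))))

lemma genCount_eq (n s t : ℕ) :
    genCount 4 n s t = ∑ i ∈ Finset.range n, (fib n s t (i + 1)).card := by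
  unfold genCount fib
  rw [Finset.card_filter, Finset.sum_product_right]
  simp only [Finset.card_filter]
  rw [Finset.range_eq_Ico, Finset.sum_Ico_add'
    (f := fun y => ∑ x ∈ Finset.Icc 1 n, if x + 4 * y ≤ n ∧
      (((x ≤ s ∨ t < x) ∧ (y ≤ s ∨ t < y) ∧
        (x + 4 * y ≤ s ∨ t < x + 4 * y)) ∨
       ((s < x ∧ x ≤ t) ∧ (s < y ∧ y ≤ t) ∧
        (s < x + 4 * y ∧ x + 4 * y ≤ t))) then 1 else 0) 0 n 1]
  rfl

lemma card_two (a b c d : ℕ) (h : b < c) :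
    (Finset.Icc (a + 1) b ∪ Finset.Icc (c + 1) d).card = (b - a) + (d - c) := by
  rw [Finset.card_union_of_disjoint]
  · simp
  · rw [Finset.disjoint_left]
    intro x hx hx'
    simp only [Finset.mem_Icc] at hx hx'
    omega

lemma fib_red (n s t y : ℕ) (hst : s ≤ t) (htn : t ≤ n) (h0 : 1 ≤ y) (hy : y ≤ s ∨ t < y) :
    (s - 4 * y) + (n - t - 4 * y) ≤ (fib n s t y).card := by
  have hsub : Finset.Icc 1 (s - 4 * y) ∪ Finset.Icc (t + 1) (n - 4 * y) ⊆ fib n s t y := by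
    intro x hx
    simp only [fib, Finset.mem_union, Finset.mem_Icc, Finset.mem_filter] at hx ⊢
    omega
  refine le_trans ?_ (Finset.card_le_card hsub)
  by_cases h : s - 4 * y < t
  · rw [show (Finset.Icc 1 (s - 4 * y)) = Finset.Icc (0 + 1) (s - 4 * y) by rfl, card_two _ _ _ _ h]
    omega
  · have : s - 4 * y = 0 := by omega
    rw [this]; simp; omega

lemma fib_blue (n s t y : ℕ) (htn : t ≤ n) (h0 : 1 ≤ y) (hy : s < y ∧ y ≤ t) :
    (fib n s t y).card = t - s - 4 * y := by
  have : fib n s t y = Finset.Icc (s + 1) (t - 4 * y) := by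
    ext x
    simp only [fib, Finset.mem_Icc, Finset.mem_filter]
    omega
  rw [this]; simp; omega

lemma fib_red_eq (n s t y : ℕ) (hst : 5 * s ≤ t) (htn : t ≤ n) (h0 : 1 ≤ y) (hy : y ≤ s) :
    (fib n s t y).card = (s - 4 * y) + (n - t - 4 * y) := by
  apply le_antisymm _ (fib_red n s t y (by omega) htn h0 (Or.inl hy))
  have hsub : fib n s t y ⊆ Finset.Icc (0 + 1) (s - 4 * y) ∪ Finset.Icc (t + 1) (n - 4 * y) := by
    intro x hx
    simp only [fib, Finset.mem_union, Finset.mem_Icc, Finset.mem_filter] at hx ⊢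
    omega
  refine le_trans (Finset.card_le_card hsub) ?_
  rw [card_two _ _ _ _ (by omega)]
  omega

lemma fib_top (n s t y : ℕ) (hn : n ≤ 4 * t + 4) (hy : t < y) :
    (fib n s t y).card = 0 := by
  rw [Finset.card_eq_zero]
  ext x
  simp only [fib, Finset.mem_Icc, Finset.mem_filter, Finset.notMem_empty, iff_false]
  omega

lemma sum_tail (n s u m : ℕ) (hs : s ≤ n) (hm : m = u - 4 * s) (hmn : m ≤ 4 * (n - s) + 4) :
    ((∑ i ∈ Finset.range n, if s < i + 1 then u - 4 * (i + 1) else 0 : ℕ) : ℤ) = fZ m := by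
  rw [← gN_eq (n - s) m hmn, ← Finset.sum_filter]
  congr 1
  have : (Finset.range n).filter (fun i => s < i + 1) = Finset.Ico s n := by
    ext i; simp only [Finset.mem_filter, Finset.mem_range, Finset.mem_Ico]; omega
  rw [this, Finset.sum_Ico_eq_sum_range]
  unfold gN
  apply Finset.sum_congr rfl
  intro i _
  omega

lemma sum_head (n s u : ℕ) (hs : s ≤ n) (hu : 4 * s ≤ u) :
    ((∑ i ∈ Finset.range n, if i + 1 ≤ s then u - 4 * (i + 1) else 0 : ℕ) : ℤ)
      = u * s - 2 * s * (s + 1) := by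
  rw [← Finset.sum_filter]
  have : (Finset.range n).filter (fun i => i + 1 ≤ s) = Finset.range s := by
    ext i; simp only [Finset.mem_filter, Finset.mem_range]; omega
  rw [this]
  have key : ∀ k ≤ s, ((∑ i ∈ Finset.range k, (u - 4 * (i + 1)) : ℕ) : ℤ) = u * k - 2 * k * (k + 1) := by
    intro k
    induction k with
    | zero => intro _; simp
    | succ k ih =>
      intro hk
      rw [Finset.sum_range_succ, Nat.cast_add, ih (by omega), Nat.cast_sub (by omega)]
      push_cast
      ring
  exact key s le_rfl

lemma count_eq (n s t : ℕ) (hst : 5 * s ≤ t) (htn : t ≤ n) (hn : n ≤ 4 * t + 4)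
    (hu : n - t ≤ 4 * s + 4) :
    (genCount 4 n s t : ℤ) = fZ s + fZ (n - t : ℕ) + fZ (t - 5 * s : ℕ) := by
  rw [genCount_eq]
  have : ∀ i ∈ Finset.range n, (fib n s t (i + 1)).card =
      (s - 4 * (i + 1)) + ((n - t) - 4 * (i + 1)) + (if s < i + 1 then (t - s) - 4 * (i + 1) else 0) := by
    intro i _
    by_cases h1 : i + 1 ≤ s
    · rw [fib_red_eq n s t _ hst htn (by omega) h1, if_neg (by omega)]; omega
    · rw [if_pos (by omega)]
      by_cases h2 : i + 1 ≤ t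
      · rw [fib_blue n s t _ htn (by omega) (by omega)]; omega
      · rw [fib_top n s t _ hn (by omega)]; omega
  rw [Finset.sum_congr rfl this, Finset.sum_add_distrib, Finset.sum_add_distrib]
  rw [Nat.cast_add, Nat.cast_add, sum_tail n s (t - s) (t - 5 * s) (by omega) (by omega) (by omega)]
  rw [← gN_eq n s (by omega), ← gN_eq n (n - t) (by omega)]
  rfl

lemma count_ge1 (n s t : ℕ) (hst : s ≤ t) (htn : t ≤ n)
    (hu : n - t ≤ 4 * s + 4) :
    fZ s + fZ (n - t : ℕ) + fZ (t - 5 * s : ℕ) ≤ (genCount 4 n s t : ℤ) := by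
  rw [genCount_eq]
  have : ∀ i ∈ Finset.range n, 
      (s - 4 * (i + 1)) + ((n - t) - 4 * (i + 1)) + (if s < i + 1 then (t - s) - 4 * (i + 1) else 0)
      ≤ (fib n s t (i + 1)).card := by
    intro i _
    by_cases h1 : i + 1 ≤ s
    · have := fib_red n s t (i + 1) hst htn (by omega) (Or.inl h1)
      rw [if_neg (by omega)]; omega
    · rw [if_pos (by omega)]
      by_cases h2 : i + 1 ≤ t
      · rw [fib_blue n s t _ htn (by omega) (by omega)]; omega
      · omega
  have h := Finset.sum_le_sum this
  rw [Finset.sum_add_distrib, Finset.sum_add_distrib] at h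
  have h' : ((_ : ℕ) : ℤ) ≤ _ := Int.ofNat_le.mpr h
  refine le_trans (le_of_eq ?_) h'
  rw [Nat.cast_add, Nat.cast_add, sum_tail n s (t - s) (t - 5 * s) (by omega) (by omega) (by omega)]
  rw [← gN_eq n s (by omega), ← gN_eq n (n - t) (by omega)]
  rfl

lemma count_ge2 (n s t : ℕ) (hst : s ≤ t) (htn : t ≤ n)
    (hu : 4 * s + 5 ≤ n - t) :
    fZ s + ((n - t : ℕ) * s - 2 * s * (s + 1)) + fZ (t - 5 * s : ℕ) + fZ (n - 5 * t : ℕ)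
      ≤ (genCount 4 n s t : ℤ) := by
  rw [genCount_eq]
  have : ∀ i ∈ Finset.range n, 
      (s - 4 * (i + 1)) + (if i + 1 ≤ s then (n - t) - 4 * (i + 1) else 0)
        + (if s < i + 1 then (t - s) - 4 * (i + 1) else 0)
        + (if t < i + 1 then (n - t) - 4 * (i + 1) else 0)
      ≤ (fib n s t (i + 1)).card := by
    intro i _
    by_cases h1 : i + 1 ≤ s
    · have := fib_red n s t (i + 1) hst htn (by omega) (Or.inl h1)
      rw [if_pos h1, if_neg (by omega), if_neg (by omega)]; omega
    · rw [if_neg h1, if_pos (by omega)]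
      by_cases h2 : i + 1 ≤ t
      · rw [fib_blue n s t _ htn (by omega) (by omega), if_neg (by omega)]; omega
      · have := fib_red n s t (i + 1) hst htn (by omega) (Or.inr (by omega))
        rw [if_pos (by omega)]; omega
  have h := Finset.sum_le_sum this
  rw [Finset.sum_add_distrib, Finset.sum_add_distrib, Finset.sum_add_distrib] at h
  have h' : ((_ : ℕ) : ℤ) ≤ _ := Int.ofNat_le.mpr h
  refine le_trans (le_of_eq ?_) h'
  rw [Nat.cast_add, Nat.cast_add, Nat.cast_add,
    sum_tail n s (t - s) (t - 5 * s) (by omega) (by omega) (by omega),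
    sum_tail n t (n - t) (n - 5 * t) (by omega) (by omega) (by omega),
    sum_head n s (n - t) (by omega) (by omega)]
  rw [← gN_eq n s (by omega)]
  rfl

lemma fZ_lb (m : ℤ) : m ^ 2 - 4 * m ≤ 8 * fZ m := by
  obtain ⟨d, h0, h1, h2⟩ := fZ_eight m
  nlinarith

lemma lower1 (n s t : ℕ) (hst : s ≤ t) (htn : t ≤ n)
    (hu : n - t ≤ 4 * s + 4) : tgt n ≤ (genCount 4 n s t : ℤ) := by
  refine le_trans ?_ (count_ge1 n s t hst htn hu)
  by_cases h5 : 5 * s ≤ t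
  · exact core n _ _ _ (by omega)
  · have h0 : fZ 0 = 0 := by simp [fZ]
    have hc := fZ_nonneg (t - 5 * s)
    by_cases hn : 5 * s ≤ n
    · have h1 := core n s (n - 5 * s : ℕ) 0 (by omega)
      have h2 : fZ (n - 5 * s : ℕ) ≤ fZ (n - t : ℕ) := fZ_mono (by omega)
      linarith
    · have h1 := core n (n / 5 : ℕ) (n % 5 : ℕ) 0 (by omega)
      have h2 : fZ (n / 5 : ℕ) ≤ fZ s := fZ_mono (by omega)
      have h3 : fZ (n % 5 : ℕ) = 0 := by
        have : n % 5 < 5 := by omega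
        generalize n % 5 = w at this
        interval_cases w <;> simp [fZ]
      have h4 := fZ_nonneg (n - t)
      linarith

lemma q1 (s τ ν : ℤ) (hs : 1 ≤ s) (hτ : 0 ≤ τ) (hν : 0 ≤ ν) :
   (25*s+5*τ+ν)^2 - 28*(25*s+5*τ+ν) + 245 ≤ 27 * (145*s^2-20*s+32*τ*s+8*ν*s+τ^2-4*τ+ν^2-4*ν) := by
  nlinarith [sq_nonneg (2*τ-5*ν), mul_nonneg hτ (by linarith : 0 ≤ s), mul_nonneg hν (by linarith : 0 ≤ s - 1), sq_nonneg (s-1), sq_nonneg ν]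

lemma q2 (s τ w : ℤ) (hs : 1 ≤ s) (hτ : 0 ≤ τ) (hw : 0 ≤ w) (hW : w ≤ 16*s+4*τ-6) :
   (9*s+τ+5+w)^2 - 28*(9*s+τ+5+w) + 245 ≤ 27 * (17*s^2+20*s+8*s*w+τ^2-4*τ) := by
  nlinarith [mul_nonneg hw (by linarith : 0 ≤ 16*s+4*τ-6-w), mul_nonneg hτ (by linarith : 0 ≤ 16*s+4*τ-6-w),
    mul_nonneg (by linarith : 0 ≤ s - 1) (by linarith : 0 ≤ 16*s+4*τ-6-w), mul_nonneg (by linarith : 0 ≤ s - 1) hw,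
    mul_nonneg (by linarith : 0 ≤ s - 1) hτ, sq_nonneg (s-1), sq_nonneg (τ-2), mul_nonneg hw hτ]

lemma q3 (s t ν : ℤ) (hs : 1 ≤ s) (hst : s ≤ t) (ht : t ≤ 5 * s - 1) (hν : 0 ≤ ν) (h : 4*s+5 ≤ 4*t+ν) :
   (5*t+ν)^2 - 28*(5*t+ν) + 245 ≤ 27 * (-15*s^2-20*s+8*s*(4*t+ν)+ν^2-4*ν) := by
  nlinarith [mul_nonneg (by linarith : 0 ≤ s) (by linarith : 0 ≤ t - s), mul_nonneg hν (by linarith : 0 ≤ 5*s-1-t),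
    mul_nonneg (by linarith : 0 ≤ t) (by linarith : 0 ≤ 5*s-1-t), mul_nonneg hν (by linarith : 0 ≤ s-1), sq_nonneg (s-1),
    mul_nonneg (by linarith : 0 ≤ s-1) (by linarith : 0 ≤ 4*t+ν-4*s-5), sq_nonneg (ν-3)]

lemma q4 (s t w : ℤ) (hs : 1 ≤ s) (hst : s ≤ t) (ht : t ≤ 5 * s - 1) (hw : 0 ≤ w) (h : 4*s+6+w ≤ 4*t) :
   (t+4*s+5+w)^2 - 28*(t+4*s+5+w) + 245 ≤ 27 * (17*s^2+20*s+8*s*w) := by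
  nlinarith [mul_nonneg hw (by linarith : 0 ≤ 4*t-(4*s+6+w)), mul_nonneg hw (by linarith : 0 ≤ 5*s-1-t),
    mul_nonneg (by linarith : 0 ≤ s-1) (by linarith : 0 ≤ 5*s-1-t), mul_nonneg (by linarith : 0 ≤ t) (by linarith : 0 ≤ 5*s-1-t),
    mul_nonneg (by linarith : 0 ≤ s-1) hw, sq_nonneg (s-1)]

lemma lower2 (n s t : ℕ) (hs : 1 ≤ s) (hst : s ≤ t) (htn : t ≤ n)
    (hu : 4 * s + 5 ≤ n - t) : tgt n ≤ (genCount 4 n s t : ℤ) := by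
  refine le_trans ?_ (count_ge2 n s t hst htn hu)
  have h1 := tgt_le n
  have h2 := fZ_lb s
  have h3 := fZ_nonneg (t - 5 * s)
  have h4 := fZ_nonneg (n - 5 * t)
  have h5 := fZ_lb (t - 5 * s : ℕ)
  have h6 := fZ_lb (n - 5 * t : ℕ)
  have hu' : (4 : ℤ) * s + 5 ≤ n - t := by omega
  have hs' : (1 : ℤ) ≤ s := by omega
  have hst' : (s : ℤ) ≤ t := by omega
  generalize fZ (s : ℤ) = A at *
  generalize fZ ((t - 5 * s : ℕ) : ℤ) = B at *
  generalize fZ ((n - 5 * t : ℕ) : ℤ) = C at *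
  rw [Nat.cast_sub htn]
  by_cases a1 : 5 * s ≤ t <;> by_cases a2 : 5 * t ≤ n
  · rw [Nat.cast_sub a1] at h5
    rw [Nat.cast_sub a2] at h6
    push_cast at *
    have := q1 s (t - 5 * s) (n - 5 * t) hs' (by omega) (by omega)
    nlinarith
  · rw [Nat.cast_sub a1] at h5
    push_cast at *
    have := q2 s (t - 5 * s) (n - t - 4 * s - 5) hs' (by omega) (by omega) (by omega)
    nlinarith
  · rw [Nat.cast_sub a2] at h6
    push_cast at *
    have := q3 s t (n - 5 * t) hs' hst' (by omega) (by omega) (by omega)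
    nlinarith
  · have := q4 s t (n - t - 4 * s - 5) hs' hst' (by omega) (by omega) (by omega)
    nlinarith

lemma small_dec : ∀ n < 20, 1 ≤ n → ∃ s < 20, ∃ t < 20, 1 ≤ s ∧ s ≤ t ∧ t ≤ n ∧
    (genCount 4 n s t : ℤ) = tgt n := by
  unfold tgt corr4 genCount
  decide +kernel

/-- For every `n ≥ 1`, the minimum over all block colorings `R^s B^(t-s) R^(n-t)`
(`1 ≤ s ≤ t ≤ n`) of the number of monochromatic triples `(x, y, x+4y)` equals
`⌊(n² − 28n + 245)/216⌋ − c(n)`. -/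
theorem min_genCount_four (n : ℕ) (hn : 1 ≤ n) :
    (∀ s t : ℕ, 1 ≤ s → s ≤ t → t ≤ n →
      ((n : ℤ) ^ 2 - 28 * n + 245) / 216 - corr4 n ≤ (genCount 4 n s t : ℤ)) ∧
    (∃ s t : ℕ, 1 ≤ s ∧ s ≤ t ∧ t ≤ n ∧
      (genCount 4 n s t : ℤ) = ((n : ℤ) ^ 2 - 28 * n + 245) / 216 - corr4 n) := by
  constructor
  · intro s t hs hst htn
    by_cases hu : n - t ≤ 4 * s + 4
    · exact lower1 n s t hst htn hu
    · exact lower2 n s t hs hst htn (by omega)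
  · by_cases h20 : n < 20
    · obtain ⟨s, _, t, _, h1, h2, h3, h4⟩ := small_dec n h20 hn
      exact ⟨s, t, h1, h2, h3, h4⟩
    · obtain ⟨k, ρ, hρ, rfl⟩ : ∃ k ρ : ℕ, ρ < 108 ∧ n = ρ + 20 + 108 * k :=
        ⟨(n - 20) / 108, (n - 20) % 108, by omega, by omega⟩
      obtain ⟨a, _, b, _, h1, h2, h3, h4⟩ := wit_dec ρ hρ
      refine ⟨a + 1 + 20 * k, ρ + 20 - b + 104 * k, by omega, by omega, by omega, ?_⟩
      rw [count_eq (ρ + 20 + 108 * k) (a + 1 + 20 * k) (ρ + 20 - b + 104 * k) (by omega) (by omega) (by omega) (by omega)]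
      change _ = tgt (ρ + 20 + 108 * k)
      rw [tgt_shift, ← h4]
      have h5 := shift3 (a + 1 : ℕ) b (ρ + 20 - b - 5 * (a + 1) : ℕ) k
      have e1 : ((a + 1 + 20 * k : ℕ) : ℤ) = (a + 1 : ℕ) + 20 * k := by push_cast; ring
      have e2 : ((ρ + 20 + 108 * k - (ρ + 20 - b + 104 * k) : ℕ) : ℤ) = b + 4 * k := by omega
      have e3 : ((ρ + 20 - b + 104 * k - 5 * (a + 1 + 20 * k) : ℕ) : ℤ)
        = (ρ + 20 - b - 5 * (a + 1) : ℕ) + 4 * k := by omega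
      rw [e1, e2, e3, h5]
      have e4 : 5 * ((a + 1 : ℕ) : ℤ) + b + (ρ + 20 - b - 5 * (a + 1) : ℕ) = (ρ + 20 : ℕ) := by omega
      rw [e4]
end

section
/- For every n ∈ ℕ with n ≥ 1, the minimal number of monochromatic generalized Schur triples of the form (x, y, x + ⌊y/2⌋) that can be attained under any 2-coloring of [n] of the block form R^s B^{t−s} R^{n−t} is M⁽¹ᐟ²⁾(n) = ⌊(15n² + 72)/76⌋ + c(n), where c(n) = 1 if n ≡ 18 (mod 38) or n ≡ 20 (mod 38), c(n) = −1 if n ≡ 19 (mod 38), and c(n) = 0 otherwise. -/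
/-- The number `M⁽¹ᐟ²⁾(n,s,t)` of monochromatic generalized Schur triples
`(x, y, x + ⌊y/2⌋)` in `[n]³` under the block coloring `R^s B^(t-s) R^(n-t)`:
pairs `(x,y) ∈ [n]²` such that `z = x + ⌊y/2⌋ ≤ n` and `x, y, z` are all red
(`≤ s` or `> t`) or all blue (in `(s,t]`). -/
def genCountHalf (n s t : ℕ) : ℕ :=
  ((Finset.Icc 1 n ×ˢ Finset.Icc 1 n).filter
    (fun p => p.1 + p.2 / 2 ≤ n ∧
      (((p.1 ≤ s ∨ t < p.1) ∧ (p.2 ≤ s ∨ t < p.2) ∧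
        (p.1 + p.2 / 2 ≤ s ∨ t < p.1 + p.2 / 2)) ∨
       ((s < p.1 ∧ p.1 ≤ t) ∧ (s < p.2 ∧ p.2 ≤ t) ∧
        (s < p.1 + p.2 / 2 ∧ p.1 + p.2 / 2 ≤ t))))).card

/-- The correction term for `a = 1/2`: `1` if `n ≡ 18` or `n ≡ 20 (mod 38)`,
`−1` if `n ≡ 19 (mod 38)`, and `0` otherwise. -/
def corrHalf (n : ℕ) : ℤ :=
  if n % 38 = 18 ∨ n % 38 = 20 then 1 else if n % 38 = 19 then -1 else 0

def ppH (k : ℤ) : ℤ := if 0 < k then k * k / 4 else 0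

def tgtH (n : ℤ) : ℤ := (15 * (n * n) + 72) / 76 +
  (if n % 38 = 18 ∨ n % 38 = 20 then 1 else if n % 38 = 19 then -1 else 0)

def gH (n s m : ℤ) : ℤ := s * s - s * s / 4 + (2 * m + s - n) * (2 * m + s - n) - s * m + n * n / 4

def lbH (n s t : ℤ) : ℤ := s * s - s * s / 4 + (n - t) * s + (n - t) * (n - t)
  + (t - s) * (t - s) - n * n / 4 + ppH (s - 2 * (n - t)) + ppH (2 * t - n) - ppH (n - 2 * t)
  - ppH (t - 2 * (n - t)) + ppH (n - 2 * (t - s)) - ppH (2 * s - n)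

lemma sq4H (k : ℤ) : 4 * (k * k / 4) = k * k - k % 2 := by
  rcases Int.emod_two_eq_zero_or_one k with h | h
  · obtain ⟨a, rfl⟩ : ∃ a, k = 2 * a := ⟨k / 2, by omega⟩
    have : 2 * a * (2 * a) = 4 * (a * a) := by ring
    rw [this, h]; omega
  · obtain ⟨a, rfl⟩ : ∃ a, k = 2 * a + 1 := ⟨k / 2, by omega⟩
    have : (2 * a + 1) * (2 * a + 1) = 4 * (a * a + a) + 1 := by ring
    rw [this, h]; omega

lemma tgtH_shift (k r : ℤ) : tgtH (38 * k + r) = tgtH r + 285 * k ^ 2 + 15 * k * r := by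
  unfold tgtH
  have h1 : (38 * k + r) % 38 = r % 38 := by omega
  have h2 : 15 * ((38 * k + r) * (38 * k + r)) + 72 = (15 * (r * r) + 72) + 76 * (285 * k ^ 2 + 15 * k * r) := by
    ring
  rw [h1, h2, Int.add_mul_ediv_left _ _ (by norm_num)]
  ring

lemma gH_shift (k r s m : ℤ) : gH (38 * k + r) (8 * k + s) (16 * k + m) =
    gH r s m + 285 * k ^ 2 + 15 * k * r := by
  have e1 := sq4H (8 * k + s)
  have e2 := sq4H (38 * k + r)
  have e3 := sq4H s
  have e4 := sq4H r
  have h1 : (8 * k + s) % 2 = s % 2 := by omega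
  have h2 : (38 * k + r) % 2 = r % 2 := by omega
  unfold gH
  nlinarith

lemma tgtH_le (n : ℤ) : 76 * tgtH n ≤ 15 * n ^ 2 + 148 := by
  unfold tgtH
  rw [pow_two]
  split_ifs <;> omega

set_option maxRecDepth 100000 in
lemma gH_finN : ∀ r < 38, ∀ s < 11, -20 < 19 * ((s : ℕ) - 1 : ℤ) - 4 * (r : ℕ) →
    19 * ((s : ℕ) - 1 : ℤ) - 4 * (r : ℕ) < 20 →
    ∀ m < 25, tgtH (r : ℕ) ≤ gH (r : ℕ) ((s : ℕ) - 1 : ℤ) ((m : ℕ) - 4 : ℤ) := by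
  decide +kernel

lemma gH_fin (r s m : ℤ) (h0 : 0 ≤ r) (h1 : r ≤ 37) (hs : -1 ≤ s) (hs' : s ≤ 9)
    (hm : -4 ≤ m) (hm' : m ≤ 20) (hb : -20 < 19 * s - 4 * r) (hb' : 19 * s - 4 * r < 20) :
    tgtH r ≤ gH r s m := by
  obtain ⟨r, rfl⟩ := Int.eq_ofNat_of_zero_le h0
  obtain ⟨a, ha⟩ := Int.eq_ofNat_of_zero_le (show 0 ≤ s + 1 by omega)
  obtain ⟨b, hb2⟩ := Int.eq_ofNat_of_zero_le (show 0 ≤ m + 4 by omega)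
  obtain rfl : s = (a : ℤ) - 1 := by omega
  obtain rfl : m = (b : ℤ) - 4 := by omega
  exact gH_finN r (by omega) a (by omega) hb hb' b (by omega)

lemma gH_ge (n s m : ℤ) : tgtH n ≤ gH n s m := by
  have e1 := sq4H s
  have e2 := sq4H n
  have ht := tgtH_le n
  have hid : 304 * gH n s m = 19 * (8 * m + 3 * s - 4 * n) ^ 2 + (19 * s - 4 * n) ^ 2
      + 60 * n ^ 2 + 76 * (s % 2) - 76 * (n % 2) := by
    unfold gH; linarith
  have hs : 0 ≤ s % 2 := by omega
  have hn : n % 2 ≤ 1 := by omega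
  by_cases hb : (19 * s - 4 * n) ^ 2 < 400
  · by_cases ha : (8 * m + 3 * s - 4 * n) ^ 2 < 25
    · have b1 : -20 < 19 * s - 4 * n := by nlinarith
      have b2 : 19 * s - 4 * n < 20 := by nlinarith
      have a1 : -5 < 8 * m + 3 * s - 4 * n := by nlinarith
      have a2 : 8 * m + 3 * s - 4 * n < 5 := by nlinarith
      obtain ⟨k, r, s', m', rfl, rfl, rfl, h0, h1⟩ : ∃ k r s' m', n = 38 * k + r ∧
          s = 8 * k + s' ∧ m = 16 * k + m' ∧ 0 ≤ r ∧ r ≤ 37 :=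
        ⟨n / 38, n % 38, s - 8 * (n / 38), m - 16 * (n / 38), by omega, by omega, by omega,
          by omega, by omega⟩
      rw [tgtH_shift, gH_shift]
      have := gH_fin r s' m' h0 h1 (by omega) (by omega) (by omega) (by omega) (by omega) (by omega)
      linarith
    · have : 0 ≤ (19 * s - 4 * n) ^ 2 := sq_nonneg _
      by_contra! hc
      push Not at ha
      have : 304 * gH n s m + 304 ≤ 304 * tgtH n := by omega
      linarith
  · have : 0 ≤ (8 * m + 3 * s - 4 * n) ^ 2 := sq_nonneg _
    by_contra! hc
    push Not at hb
    have : 304 * gH n s m + 304 ≤ 304 * tgtH n := by omega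
    linarith

set_option maxRecDepth 100000 in
lemma lbH_finN : ∀ n < 31, ∀ t < n + 1, ∀ s < t + 1, 1 ≤ s →
    tgtH (n : ℕ) ≤ lbH (n : ℕ) (s : ℕ) (t : ℕ) := by
  decide +kernel

lemma lbH_fin (n s t : ℤ) (hs : 1 ≤ s) (hst : s ≤ t) (htn : t ≤ n) (hn : n ≤ 30) :
    tgtH n ≤ lbH n s t := by
  lift n to ℕ using by omega
  lift s to ℕ using by omega
  lift t to ℕ using by omega
  exact lbH_finN n (by omega) t (by omega) s (by omega) (by omega)

lemma sumDH (N : ℕ) : ∑ y ∈ Finset.Ioc 0 N, ((y / 2 : ℕ) : ℤ) = (N : ℤ) * N / 4 := by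
  induction N with
  | zero => simp
  | succ N ih =>
    rw [← Finset.insert_Ioc_right_eq_Ioc_add_one (Nat.zero_le N), Finset.sum_insert (by simp), ih]
    have e1 := sq4H N
    have e2 := sq4H ((N : ℤ) + 1)
    push_cast
    have : ((N : ℤ) + 1) * (N + 1) = N * N + 2 * N + 1 := by ring
    omega

lemma sumAH (N k : ℕ) : ∑ y ∈ Finset.Ioc 0 N, ((y / 2 - k : ℕ) : ℤ) = ppH (N - 2 * k) := by
  induction N with
  | zero => simp [ppH]
  | succ N ih =>
    rw [← Finset.insert_Ioc_right_eq_Ioc_add_one (Nat.zero_le N), Finset.sum_insert (by simp), ih]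
    have e1 := sq4H ((N : ℤ) - 2 * k)
    have e2 := sq4H ((N : ℤ) + 1 - 2 * k)
    have : ((N : ℤ) + 1 - 2 * k) * (N + 1 - 2 * k) =
      (N - 2 * k) * (N - 2 * k) + 2 * (N - 2 * k) + 1 := by ring
    unfold ppH
    push_cast
    split_ifs with h1 h2 h2
    · omega
    · omega
    · have : (N : ℤ) + 1 - 2 * k = 1 := by omega
      rw [this]; norm_num; omega
    · omega

lemma sumBH (N k : ℕ) : ∑ y ∈ Finset.Ioc 0 N, ((k - y / 2 : ℕ) : ℤ)
    = N * k - (N : ℤ) * N / 4 + ppH (N - 2 * k) := by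
  rw [← sumAH, ← sumDH]
  have : ∀ y ∈ Finset.Ioc 0 N, ((k - y / 2 : ℕ) : ℤ) =
      k - ((y / 2 : ℕ) : ℤ) + ((y / 2 - k : ℕ) : ℤ) := by
    intro y _; omega
  rw [Finset.sum_congr rfl this, Finset.sum_add_distrib, Finset.sum_sub_distrib]
  simp

def cH (n s t y : ℕ) : ℕ :=
  if s < y ∧ y ≤ t then (t - s) - y / 2
  else (s - y / 2) + (n - t - y / 2) + min (min s (n - t)) (y / 2 - (t - s))

lemma genCount_eqH (n s t : ℕ) (hst : s ≤ t) (htn : t ≤ n) :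
    genCountHalf n s t = ∑ y ∈ Finset.Ioc 0 n, cH n s t y := by
  unfold genCountHalf
  rw [Finset.card_filter, Finset.sum_product_right]
  have : Finset.Icc 1 n = Finset.Ioc 0 n := by ext; simp; omega
  conv_lhs => rw [this]
  refine Finset.sum_congr rfl fun y hy => ?_
  rw [← Finset.card_filter]
  simp only [Finset.mem_Ioc] at hy
  unfold cH
  split_ifs with h
  · have : (Finset.Ioc 0 n).filter (fun x => x + y / 2 ≤ n ∧
      (((x ≤ s ∨ t < x) ∧ (y ≤ s ∨ t < y) ∧ (x + y / 2 ≤ s ∨ t < x + y / 2)) ∨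
       ((s < x ∧ x ≤ t) ∧ (s < y ∧ y ≤ t) ∧ (s < x + y / 2 ∧ x + y / 2 ≤ t))))
       = Finset.Ioc s (t - y / 2) := by
      ext x; simp only [Finset.mem_filter, Finset.mem_Ioc]; omega
    rw [this, Nat.card_Ioc]; omega
  · have : (Finset.Ioc 0 n).filter (fun x => x + y / 2 ≤ n ∧
      (((x ≤ s ∨ t < x) ∧ (y ≤ s ∨ t < y) ∧ (x + y / 2 ≤ s ∨ t < x + y / 2)) ∨
       ((s < x ∧ x ≤ t) ∧ (s < y ∧ y ≤ t) ∧ (s < x + y / 2 ∧ x + y / 2 ≤ t))))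
       = (Finset.Ioc 0 (s - y / 2) ∪ Finset.Ioc t (n - y / 2)) ∪
          Finset.Ioc (t - y / 2) (min s (n - y / 2)) := by
      ext x; simp only [Finset.mem_filter, Finset.mem_Ioc, Finset.mem_union]; omega
    rw [this, Finset.card_union_of_disjoint, Finset.card_union_of_disjoint, Nat.card_Ioc,
      Nat.card_Ioc, Nat.card_Ioc]
    · omega
    · rw [Finset.disjoint_left]; intro x; simp only [Finset.mem_Ioc]; omega
    · rw [Finset.disjoint_left]; intro x; simp only [Finset.mem_Ioc, Finset.mem_union]; omega

lemma splitH (f : ℕ → ℤ) (n s t : ℕ) (hst : s ≤ t) (htn : t ≤ n) :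
    ∑ y ∈ Finset.Ioc 0 n, f y = ∑ y ∈ Finset.Ioc 0 s, f y + ∑ y ∈ Finset.Ioc s t, f y
      + ∑ y ∈ Finset.Ioc t n, f y := by
  rw [Finset.sum_Ioc_consecutive _ (Nat.zero_le _) hst,
    Finset.sum_Ioc_consecutive _ (Nat.zero_le _) htn]

lemma subH (f : ℕ → ℤ) (s t : ℕ) (hst : s ≤ t) :
    ∑ y ∈ Finset.Ioc s t, f y = ∑ y ∈ Finset.Ioc 0 t, f y - ∑ y ∈ Finset.Ioc 0 s, f y := by
  rw [← Finset.sum_Ioc_consecutive _ (Nat.zero_le _) hst]; ring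

lemma ppH_nonpos {k : ℤ} (h : k ≤ 0) : ppH k = 0 := by
  unfold ppH; rw [if_neg (by omega)]

/-- the sum of the unclipped terms -/
lemma mainsumH (n s t : ℕ) (hst : s ≤ t) (htn : t ≤ n) :
    ∑ y ∈ Finset.Ioc 0 s, (((s - y / 2 : ℕ) : ℤ) + ((n - t - y / 2 : ℕ) : ℤ)
        + ((y / 2 - (t - s) : ℕ) : ℤ))
      + ∑ y ∈ Finset.Ioc s t, ((t - s - y / 2 : ℕ) : ℤ)
      + ∑ y ∈ Finset.Ioc t n, (((n - t - y / 2 : ℕ) : ℤ) + ((y / 2 - (t - s) : ℕ) : ℤ))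
    = lbH n s t + ppH (n - 2 * t) + ppH (2 * s - n) := by
  simp only [Finset.sum_add_distrib]
  rw [subH _ s t hst, subH _ t n htn, subH _ t n htn]
  simp only [sumAH, sumBH]
  rw [ppH_nonpos (k := (s : ℤ) - 2 * s) (by omega)]
  unfold lbH
  push_cast [Nat.cast_sub hst, Nat.cast_sub htn]
  have h1 : ppH ((n : ℤ) - 2 * (n - t)) = ppH (2 * t - n) := by congr 1; ring
  rw [h1]
  ring_nf

lemma genCount_geH (n s t : ℕ) (hst : s ≤ t) (htn : t ≤ n) :
    lbH n s t ≤ (genCountHalf n s t : ℤ) := by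
  rw [genCount_eqH n s t hst htn]
  push_cast
  have hm := mainsumH n s t hst htn
  have h1 := sumAH n t
  have h2 := sumAH n (n - s)
  have h3 : ((n : ℤ) - 2 * ((n - s : ℕ) : ℤ)) = 2 * s - n := by omega
  rw [h3] at h2
  rw [splitH _ n s t hst htn] at h1 h2 ⊢
  have k1 : ∑ y ∈ Finset.Ioc 0 s, (((s - y / 2 : ℕ) : ℤ) + ((n - t - y / 2 : ℕ) : ℤ)
        + ((y / 2 - (t - s) : ℕ) : ℤ)) ≤ ∑ y ∈ Finset.Ioc 0 s, (cH n s t y : ℤ)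
        + ∑ y ∈ Finset.Ioc 0 s, ((y / 2 - t : ℕ) : ℤ)
        + ∑ y ∈ Finset.Ioc 0 s, ((y / 2 - (n - s) : ℕ) : ℤ) := by
    rw [← Finset.sum_add_distrib, ← Finset.sum_add_distrib]
    refine Finset.sum_le_sum fun y hy => ?_
    rw [Finset.mem_Ioc] at hy
    unfold cH
    rw [if_neg (by omega)]
    omega
  have k2 : ∑ y ∈ Finset.Ioc s t, ((t - s - y / 2 : ℕ) : ℤ)
        ≤ ∑ y ∈ Finset.Ioc s t, (cH n s t y : ℤ)
        + ∑ y ∈ Finset.Ioc s t, ((y / 2 - t : ℕ) : ℤ)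
        + ∑ y ∈ Finset.Ioc s t, ((y / 2 - (n - s) : ℕ) : ℤ) := by
    rw [← Finset.sum_add_distrib, ← Finset.sum_add_distrib]
    refine Finset.sum_le_sum fun y hy => ?_
    rw [Finset.mem_Ioc] at hy
    unfold cH
    rw [if_pos (by omega)]
    omega
  have k3 : ∑ y ∈ Finset.Ioc t n, (((n - t - y / 2 : ℕ) : ℤ) + ((y / 2 - (t - s) : ℕ) : ℤ))
        ≤ ∑ y ∈ Finset.Ioc t n, (cH n s t y : ℤ)
        + ∑ y ∈ Finset.Ioc t n, ((y / 2 - t : ℕ) : ℤ)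
        + ∑ y ∈ Finset.Ioc t n, ((y / 2 - (n - s) : ℕ) : ℤ) := by
    rw [← Finset.sum_add_distrib, ← Finset.sum_add_distrib]
    refine Finset.sum_le_sum fun y hy => ?_
    rw [Finset.mem_Ioc] at hy
    unfold cH
    rw [if_neg (by omega)]
    omega
  linarith

lemma genCount_leH (n s t : ℕ) (hst : s ≤ t) (htn : t ≤ n) (h2 : 2 * s ≤ t + 1) :
    (genCountHalf n s t : ℤ) ≤ lbH n s t + ppH (n - 2 * t) + ppH (2 * s - n) := by
  rw [genCount_eqH n s t hst htn, ← mainsumH n s t hst htn]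
  push_cast
  rw [splitH _ n s t hst htn]
  refine add_le_add (add_le_add ?_ ?_) ?_
  all_goals
    refine Finset.sum_le_sum fun y hy => ?_
    rw [Finset.mem_Ioc] at hy
    unfold cH
  · rw [if_neg (by omega)]
    omega
  · rw [if_pos (by omega)]
  · rw [if_neg (by omega)]
    omega

lemma ppH_bd (k : ℤ) : (0 < k ∧ 4 * ppH k ≤ k * k ∧ k * k - 1 ≤ 4 * ppH k) ∨
    (k ≤ 0 ∧ ppH k = 0) := by
  have := sq4H k
  by_cases h : 0 < k
  · left; unfold ppH; rw [if_pos h]; omega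
  · right; exact ⟨by omega, ppH_nonpos (by omega)⟩

lemma ppH_even (a n : ℤ) (h : 0 ≤ 2 * a - n) : ppH (2 * a - n) = a * a - a * n + n * n / 4 := by
  rcases h.lt_or_eq with h | h
  · unfold ppH
    rw [if_pos h]
    have : (2 * a - n) * (2 * a - n) = n * n + 4 * (a * a - a * n) := by ring
    rw [this]; omega
  · have : n = 2 * a := by omega
    rw [ppH_nonpos (by omega), this]
    have : 2 * a * (2 * a) = 4 * (a * a) := by ring
    rw [this, Int.mul_ediv_cancel_left _ (by norm_num)]; ring

lemma lbH_eq (n s t : ℤ) (h1 : n ≤ 2 * t) (h2 : t ≤ 2 * (n - t)) (h3 : 2 * (t - s) ≤ n)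
    (h4 : 2 * s ≤ n) : lbH n s t = gH n s (t - s) + ppH (s - 2 * (n - t)) := by
  unfold lbH gH
  rw [ppH_even t n (by omega), ppH_nonpos (k := n - 2 * t) (by omega),
    ppH_nonpos (k := t - 2 * (n - t)) (by omega), ppH_nonpos (k := 2 * s - n) (by omega)]
  have : ppH (n - 2 * (t - s)) = (t - s) * (t - s) - (t - s) * n + n * n / 4 := by
    have e := ppH_even (n - (t - s)) n (by omega)
    have : 2 * (n - (t - s)) - n = n - 2 * (t - s) := by ring
    rw [this] at e
    rw [e]; ring
  rw [this]; ring

lemma ppH_nonneg (k : ℤ) : 0 ≤ ppH k := by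
  rcases ppH_bd k with h | h
  · nlinarith
  · omega

/-- homogeneous base form -/
def qH (s m u : ℤ) : ℤ := 3 * s ^ 2 + 4 * u * s + 4 * u ^ 2 + 4 * m ^ 2 - (s + m + u) ^ 2

lemma prodsH (a b c d : ℤ) (ha : 0 ≤ a) (hb : 0 ≤ b) (hc : 0 ≤ c) (hd : 0 ≤ d) :
    0 ≤ a * a ∧ 0 ≤ a * b ∧ 0 ≤ a * c ∧ 0 ≤ a * d ∧ 0 ≤ b * b ∧ 0 ≤ b * c ∧ 0 ≤ b * d ∧
    0 ≤ c * c ∧ 0 ≤ c * d ∧ 0 ≤ d * d := by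
  refine ⟨?_, ?_, ?_, ?_, ?_, ?_, ?_, ?_, ?_, ?_⟩ <;> positivity

/-- `2t < n` -/
lemma r1H (s m u : ℤ) (hs : 0 ≤ s) (hm : 0 ≤ m) (h : 0 ≤ u - s - m) :
    76 * (s + m + u) ^ 2 ≤ 95 * (qH s m u - (u - s - m) ^ 2 + (s + u - m) ^ 2) := by
  obtain ⟨h1, h2, h3, h4, h5, h6, h7, h8, h9, h10⟩ := prodsH s m _ _ hs hm h h
  have := sq_nonneg (9 * s - 2 * m)
  unfold qH
  linarith

/-- A+ D+ E+ -/
lemma r2H (s m u : ℤ) (hm : 0 ≤ m) (hu : 0 ≤ u) (hA : 0 ≤ s - 2 * u)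
    (hE : 0 ≤ s - m - u) :
    76 * (s + m + u) ^ 2 ≤ 95 * (qH s m u + (s - 2 * u) ^ 2 + (s + m - u) ^ 2
      - (s + m - 2 * u) ^ 2 + (s + u - m) ^ 2 - (s - m - u) ^ 2) := by
  obtain ⟨h1, h2, h3, h4, h5, h6, h7, h8, h9, h10⟩ := prodsH m u _ _ hm hu hA hE
  have := sq_nonneg (6 * s - 7 * m + 0 * u)
  have := sq_nonneg (5 * s - 6 * m + 1 * u)
  have := sq_nonneg (5 * s - 6 * m + 2 * u)
  have := sq_nonneg (5 * s - 6 * m + 3 * u)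
  have := sq_nonneg (8 * s - 10 * m + 3 * u)
  have := sq_nonneg (8 * s - 9 * m + 3 * u)
  unfold qH
  linarith

/-- A+ D+ E- -/
lemma r3H (s m u : ℤ) (hu : 0 ≤ u) (hA : 0 ≤ s - 2 * u) (hD : 0 ≤ s + u - m)
    (hE : 0 ≤ m + u - s) :
    76 * (s + m + u) ^ 2 ≤ 95 * (qH s m u + (s - 2 * u) ^ 2 + (s + m - u) ^ 2
      - (s + m - 2 * u) ^ 2 + (s + u - m) ^ 2) := by
  obtain ⟨h1, h2, h3, h4, h5, h6, h7, h8, h9, h10⟩ := prodsH u _ _ _ hu hA hD hE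
  have := sq_nonneg (5 * s - 8 * m + 9 * u)
  have := sq_nonneg (7 * s - 8 * m + 5 * u)
  unfold qH
  linarith

/-- A+ D- E- -/
lemma r4H (s m u : ℤ) (hs : 0 ≤ s) (hu : 0 ≤ u) (hA : 0 ≤ s - 2 * u) (hD : 0 ≤ m - s - u) :
    76 * (s + m + u) ^ 2 ≤ 95 * (qH s m u + (s - 2 * u) ^ 2 + (s + m - u) ^ 2
      - (s + m - 2 * u) ^ 2) := by
  obtain ⟨h1, h2, h3, h4, h5, h6, h7, h8, h9, h10⟩ := prodsH s u _ _ hs hu hA hD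
  unfold qH
  linarith

/-- A- C+ D+ E+ -/
lemma r5H (s m u : ℤ) (hm : 0 ≤ m) (hA : 0 ≤ 2 * u - s) (hC : 0 ≤ s + m - 2 * u)
    (hE : 0 ≤ s - m - u) :
    76 * (s + m + u) ^ 2 ≤ 95 * (qH s m u + (s + m - u) ^ 2
      - (s + m - 2 * u) ^ 2 + (s + u - m) ^ 2 - (s - m - u) ^ 2) := by
  obtain ⟨h1, h2, h3, h4, h5, h6, h7, h8, h9, h10⟩ := prodsH m _ _ _ hm hA hC hE
  unfold qH
  linarith

/-- A- C+ D+ E- -/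
lemma r6H (s m u : ℤ) (hA : 0 ≤ 2 * u - s) (hC : 0 ≤ s + m - 2 * u)
    (hD : 0 ≤ s + u - m) (hE : 0 ≤ m + u - s) :
    378 * (s + m + u) ^ 2 ≤ 475 * (qH s m u + (s + m - u) ^ 2
      - (s + m - 2 * u) ^ 2 + (s + u - m) ^ 2) := by
  obtain ⟨h1, h2, h3, h4, h5, h6, h7, h8, h9, h10⟩ := prodsH _ _ _ _ hA hC hD hE
  have := sq_nonneg (7 * s - 8 * m + 5 * u)
  have := sq_nonneg (7 * s - 8 * m + 6 * u)
  have := sq_nonneg (6 * s - 8 * m + 5 * u)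
  have := sq_nonneg (6 * s - 8 * m + 6 * u)
  have := sq_nonneg (7 * s - 8 * m + 4 * u)
  have := sq_nonneg (6 * s - 7 * m + 5 * u)
  have := sq_nonneg (5 * s - 8 * m + 6 * u)
  have := sq_nonneg (8 * s - 8 * m + 4 * u)
  unfold qH
  linarith

/-- A- C+ D- E- -/
lemma r7H (s m u : ℤ) (hs : 0 ≤ s) (hC : 0 ≤ s + m - 2 * u)
    (hD : 0 ≤ m - s - u) (hA : 0 ≤ 2 * u - s) :
    76 * (s + m + u) ^ 2 ≤ 95 * (qH s m u + (s + m - u) ^ 2 - (s + m - 2 * u) ^ 2) := by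
  obtain ⟨h1, h2, h3, h4, h5, h6, h7, h8, h9, h10⟩ := prodsH s _ _ _ hs hA hC hD
  unfold qH
  linarith

/-- C- D+ E+ -/
lemma r8H (s m u : ℤ) (hm : 0 ≤ m) (hC : 0 ≤ 2 * u - s - m)
    (hE : 0 ≤ s - m - u) :
    76 * (s + m + u) ^ 2 ≤ 95 * (qH s m u + (s + m - u) ^ 2
      + (s + u - m) ^ 2 - (s - m - u) ^ 2) := by
  obtain ⟨h1, h2, h3, h4, h5, h6, h7, h8, h9, h10⟩ := prodsH m _ _ _ hm hC hE hE
  unfold qH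
  linarith

/-- C- D- -/
lemma r9H (s m u : ℤ) (hs : 0 ≤ s) (hC : 0 ≤ 2 * u - s - m) (hB : 0 ≤ s + m - u)
    (hD : 0 ≤ m - s - u) :
    76 * (s + m + u) ^ 2 ≤ 95 * (qH s m u + (s + m - u) ^ 2) := by
  obtain ⟨h1, h2, h3, h4, h5, h6, h7, h8, h9, h10⟩ := prodsH s _ _ _ hs hC hB hD
  unfold qH
  linarith

lemma lbH_ge (n s t : ℤ) (hs : 1 ≤ s) (hst : s ≤ t) (htn : t ≤ n) : tgtH n ≤ lbH n s t := by
  by_cases hn : n ≤ 30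
  · exact lbH_fin n s t hs hst htn hn
  by_cases h : n ≤ 2 * t ∧ t ≤ 2 * (n - t) ∧ 2 * (t - s) ≤ n ∧ 2 * s ≤ n
  · obtain ⟨h1, h2, h3, h4⟩ := h
    rw [lbH_eq n s t h1 h2 h3 h4]
    have := gH_ge n s (t - s)
    have := ppH_nonneg (s - 2 * (n - t))
    linarith
  have ht := tgtH_le n
  suffices 15 * n ^ 2 + 73 ≤ 76 * lbH n s t by omega
  push Not at hn
  have e1 := sq4H s
  have e2 := sq4H n
  have e3 : s % 2 ≥ 0 := by omega
  have e4 : n % 2 ≥ 0 := by omega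
  unfold lbH
  obtain ⟨m, rfl⟩ : ∃ m, t = s + m := ⟨t - s, by ring⟩
  obtain ⟨u, rfl⟩ : ∃ u, n = s + m + u := ⟨n - s - m, by ring⟩
  have pA := ppH_bd (s - 2 * (s + m + u - (s + m)))
  have pB := ppH_bd (2 * (s + m) - (s + m + u))
  have pB' := ppH_bd ((s + m + u) - 2 * (s + m))
  have pC := ppH_bd (s + m - 2 * (s + m + u - (s + m)))
  have pD := ppH_bd (s + m + u - 2 * (s + m - s))
  have pE := ppH_bd (2 * s - (s + m + u))
  have hm : 0 ≤ m := by omega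
  have hu : 0 ≤ u := by omega
  generalize ppH (s - 2 * (s + m + u - (s + m))) = A at *
  generalize ppH (2 * (s + m) - (s + m + u)) = B at *
  generalize ppH ((s + m + u) - 2 * (s + m)) = B' at *
  generalize ppH (s + m - 2 * (s + m + u - (s + m))) = C at *
  generalize ppH (s + m + u - 2 * (s + m - s)) = D at *
  generalize ppH (2 * s - (s + m + u)) = E at *
  generalize s * s / 4 = S4 at *
  generalize (s + m + u) * (s + m + u) / 4 = N4 at *
  generalize s % 2 = S2 at *
  generalize (s + m + u) % 2 = N2 at *
  have hN : 31 * 31 ≤ (s + m + u) * (s + m + u) := by nlinarith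
  clear ht
  have hs0 : 0 ≤ s := by omega
  rcases pB' with ⟨b0', b1', b2'⟩ | ⟨b0', b1'⟩
  · rcases pA with ⟨a0, a1, a2⟩ | ⟨a0, a1⟩
    · exfalso; omega
    rcases pB with ⟨b0, b1, b2⟩ | ⟨b0, b1⟩
    · exfalso; omega
    rcases pC with ⟨c0, c1, c2⟩ | ⟨c0, c1⟩
    · exfalso; omega
    rcases pD with ⟨d0, d1, d2⟩ | ⟨d0, d1⟩
    swap
    · exfalso; omega
    rcases pE with ⟨f0, f1, f2⟩ | ⟨f0, f1⟩
    · exfalso; omega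
    have := r1H s m u (by omega) (by omega) (by omega)
    unfold qH at this
    linarith
  have hB : (s + m - u) * (s + m - u) - 1 ≤ 4 * B := by
    rcases pB with ⟨b0, b1, b2⟩ | ⟨b0, b1⟩
    · linarith
    · have : s + m - u = 0 := by omega
      rw [this, b1]; norm_num
  rcases pA with ⟨a0, a1, a2⟩ | ⟨a0, a1⟩
  · rcases pC with ⟨c0, c1, c2⟩ | ⟨c0, c1⟩
    swap
    · exfalso; omega
    rcases pD with ⟨d0, d1, d2⟩ | ⟨d0, d1⟩ <;> rcases pE with ⟨f0, f1, f2⟩ | ⟨f0, f1⟩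
    · have := r2H s m u (by omega) (by omega) (by omega) (by omega)
      unfold qH at this
      linarith
    · have := r3H s m u (by omega) (by omega) (by omega) (by omega)
      unfold qH at this
      linarith
    · exfalso; omega
    · have := r4H s m u (by omega) (by omega) (by omega) (by omega)
      unfold qH at this
      linarith
  rcases pC with ⟨c0, c1, c2⟩ | ⟨c0, c1⟩
  · rcases pD with ⟨d0, d1, d2⟩ | ⟨d0, d1⟩ <;> rcases pE with ⟨f0, f1, f2⟩ | ⟨f0, f1⟩
    · have := r5H s m u (by omega) (by omega) (by omega) (by omega)
      unfold qH at this
      linarith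
    · have := r6H s m u (by omega) (by omega) (by omega) (by omega)
      unfold qH at this
      linarith
    · exfalso; omega
    · have := r7H s m u hs0 (by omega) (by omega) (by omega)
      unfold qH at this
      linarith
  · rcases pD with ⟨d0, d1, d2⟩ | ⟨d0, d1⟩ <;> rcases pE with ⟨f0, f1, f2⟩ | ⟨f0, f1⟩
    · have := r8H s m u (by omega) (by omega) (by omega)
      unfold qH at this
      linarith
    · exfalso; omega
    · exfalso; omega
    · have := r9H s m u (by omega) (by omega) (by omega) (by omega)
      unfold qH at this
      linarith

lemma tgtH_eq (n : ℕ) : tgtH n = (15 * (n : ℤ) ^ 2 + 72) / 76 + corrHalf n := by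
  unfold tgtH corrHalf
  rw [← pow_two]
  have : ((n : ℤ) % 38) = ((n % 38 : ℕ) : ℤ) := by simp
  rw [this]
  norm_cast

lemma tableN : ∀ i < 38, gH ((i : ℕ) + 5 : ℤ) ((4 * (i + 5 : ℤ) + 8) / 19)
    ((4 * (i + 5 : ℤ) - 3 * ((4 * (i + 5 : ℤ) + 8) / 19) + 3) / 8) = tgtH (i + 5 : ℤ) := by
  decide +kernel

lemma tableN2 : ∀ i < 38, (4 * ((i : ℕ) + 5 : ℤ) + 8) / 19 +
    (4 * (i + 5 : ℤ) - 3 * ((4 * (i + 5 : ℤ) + 8) / 19) + 3) / 8 ≤ 2 * (i + 5 - (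
    (4 * (i + 5 : ℤ) + 8) / 19 +
    (4 * (i + 5 : ℤ) - 3 * ((4 * (i + 5 : ℤ) + 8) / 19) + 3) / 8)) := by
  decide +kernel

lemma tableH (r : ℤ) (h5 : 5 ≤ r) (h42 : r ≤ 42) : ∃ s t : ℤ, (1 ≤ s ∧ s ≤ 10) ∧
    (s ≤ t ∧ t ≤ r) ∧ 2 * s ≤ t + 1 ∧ r ≤ 2 * t ∧ t ≤ 2 * (r - t) ∧
      2 * (t - s) ≤ r ∧ 2 * s ≤ r ∧ s ≤ 2 * (r - t) ∧ gH r s (t - s) = tgtH r := by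
  obtain ⟨i, hi⟩ := Int.eq_ofNat_of_zero_le (show 0 ≤ r - 5 by omega)
  obtain rfl : r = (i : ℤ) + 5 := by omega
  have h := tableN i (by omega)
  refine ⟨(4 * (i + 5 : ℤ) + 8) / 19, (4 * (i + 5 : ℤ) + 8) / 19 +
    (4 * (i + 5 : ℤ) - 3 * ((4 * (i + 5 : ℤ) + 8) / 19) + 3) / 8, ⟨by omega, by omega⟩,
    ⟨by omega, by omega⟩, by omega, by omega, tableN2 i (by omega), by omega, by omega,
    by omega, ?_⟩
  rw [add_sub_cancel_left]
  exact h

theorem min_genCount_half (n : ℕ) (hn : 1 ≤ n) :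
    (∀ s t : ℕ, 1 ≤ s → s ≤ t → t ≤ n →
      (15 * (n : ℤ) ^ 2 + 72) / 76 + corrHalf n ≤ (genCountHalf n s t : ℤ)) ∧
    (∃ s t : ℕ, 1 ≤ s ∧ s ≤ t ∧ t ≤ n ∧
      (genCountHalf n s t : ℤ) = (15 * (n : ℤ) ^ 2 + 72) / 76 + corrHalf n) := by
  rw [← tgtH_eq]
  have lower : ∀ s t : ℕ, 1 ≤ s → s ≤ t → t ≤ n → tgtH n ≤ (genCountHalf n s t : ℤ) := by
    intro s t hs hst htn
    exact (lbH_ge n s t (by omega) (by omega) (by omega)).trans (genCount_geH n s t hst htn)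
  refine ⟨lower, ?_⟩
  by_cases h1 : n = 1
  · subst h1; exact ⟨1, 1, by decide⟩
  by_cases h2 : n = 2
  · subst h2; exact ⟨1, 2, by decide⟩
  by_cases h3 : n = 3
  · subst h3; exact ⟨1, 2, by decide⟩
  by_cases h4 : n = 4
  · subst h4; exact ⟨1, 3, by decide⟩
  obtain ⟨k, r, hnk, hr1, hr2⟩ : ∃ k r : ℕ, n = 38 * k + r ∧ 5 ≤ r ∧ r ≤ 42 :=
    ⟨(n - 5) / 38, (n - 5) % 38 + 5, by omega, by omega, by omega⟩
  obtain ⟨s, t, hs, ht, c1, c2, c3, c4, c5, c6, hg⟩ :=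
    tableH r (by omega) (by omega)
  lift s to ℕ using by omega
  lift t to ℕ using by omega
  refine ⟨8 * k + s, 24 * k + t, by omega, by omega, by omega, ?_⟩
  refine le_antisymm ?_ (lower _ _ (by omega) (by omega) (by omega))
  refine (genCount_leH n _ _ (by omega) (by omega) (by omega)).trans ?_
  rw [ppH_nonpos (k := (n : ℤ) - 2 * (24 * k + t : ℕ)) (by push_cast; omega),
    ppH_nonpos (k := 2 * ((8 * k + s : ℕ) : ℤ) - n) (by push_cast; omega),
    lbH_eq _ _ _ (by push_cast; omega) (by push_cast; omega) (by push_cast; omega)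
      (by push_cast; omega), ppH_nonpos (k := ((8 * k + s : ℕ) : ℤ) - 2 * (n - (24 * k + t : ℕ)))
      (by push_cast; omega), hnk]
  push_cast
  have : (24 * (k : ℤ) + t - (8 * k + s)) = 16 * k + (t - s) := by ring
  rw [this, gH_shift, tgtH_shift, hg]
  linarith
end
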